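/- arXiv:2210.16406 — 3 statements merged into one kernel-verified Lean document; each statement's English description precedes it below -/
import Mathlib

section
/- The complete graph K_n with n even can be decomposed into exactly n/2 edge-disjoint Hamiltonian paths (Walecki decomposition). -/
open SimpleGraph

/-- A path decomposition of `G`: a list of paths such that every edge of `G`
lies in exactly one of them. -/
def IsPathDecomp {V : Type*} (G : SimpleGraph V)
    (P : List (Σ u v : V, G.Walk u v)) : Prop :=
  (∀ p ∈ P, p.2.2.IsPath) ∧
  P.Pairwise (fun p q => ∀ e, e ∈ p.2.2.edges → e ∉ q.2.2.edges) ∧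
  ∀ e, e ∈ G.edgeSet ↔ ∃ p ∈ P, e ∈ p.2.2.edges

lemma walk_of_fun {V : Type*} (G : SimpleGraph V) (f : ℕ → V) (k : ℕ)
    (h : ∀ j < k, G.Adj (f j) (f (j+1))) :
    ∃ w : G.Walk (f 0) (f k), w.support = (List.range (k+1)).map f ∧
      w.edges = (List.range k).map (fun j => s(f j, f (j+1))) := by
  induction k with
  | zero => exact ⟨Walk.nil, by simp, by simp⟩
  | succ k ih =>
    obtain ⟨w, h1, h2⟩ := ih (fun j hj => h j (by omega))
    refine ⟨w.concat (h k (by omega)), ?_, ?_⟩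
    · rw [Walk.support_concat, h1, List.range_succ (n := k+1)]; simp
    · rw [Walk.edges_concat, h2, List.range_succ (n := k)]; simp

/-- The zigzag vertex number `j` of path `i` in `K_{2m}`. -/
def zig (m i j : ℕ) : ℕ :=
  if j % 2 = 0 then i + j / 2
  else if j / 2 + 1 ≤ i then i - 1 - j / 2 else i + 2 * m - 1 - j / 2

lemma zig_lt {m i j : ℕ} (hi : i < m) (hj : j < 2 * m) : zig m i j < 2 * m := by
  unfold zig; split_ifs <;> omega

lemma zig_inj {m i j k : ℕ} (hi : i < m) (hj : j < 2 * m) (hk : k < 2 * m)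
    (h : zig m i j = zig m i k) : j = k := by
  unfold zig at h; split_ifs at h <;> omega

lemma zig_sum {m i j : ℕ} (hi : i < m) (hj : j + 1 < 2 * m) :
    zig m i j + zig m i (j+1) = 2 * i ∨ zig m i j + zig m i (j+1) + 1 = 2 * i ∨
    zig m i j + zig m i (j+1) = 2 * i + 2 * m ∨
    zig m i j + zig m i (j+1) + 1 = 2 * i + 2 * m := by
  unfold zig; split_ifs <;> omega

lemma zig_cover {m a b : ℕ} (ha : a < 2 * m) (hb : b < 2 * m) (hab : a < b) :
    ∃ i < m, ∃ j, j + 1 < 2 * m ∧ ((zig m i j = a ∧ zig m i (j+1) = b) ∨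
      (zig m i j = b ∧ zig m i (j+1) = a)) := by
  obtain ⟨i, hi, h⟩ : ∃ i < m, a + b = 2 * i ∨ a + b + 1 = 2 * i ∨ a + b = 2 * i + 2 * m ∨
      a + b + 1 = 2 * i + 2 * m := by
    by_cases h : (a + b + 1) / 2 < m
    · exact ⟨(a + b + 1) / 2, h, by omega⟩
    · exact ⟨(a + b + 1) / 2 - m, by omega, by omega⟩
  refine ⟨i, hi, ?_⟩
  -- `r` is the residue of `a - i`
  obtain ⟨r, hr, hr'⟩ : ∃ r < 2 * m, a = i + r ∨ a + 2 * m = i + r := by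
    by_cases h : i ≤ a
    · exact ⟨a - i, by omega, by omega⟩
    · exact ⟨a + 2 * m - i, by omega, by omega⟩
  by_cases hrm : r < m
  · by_cases hp : (a + b) % 2 = 0
    · refine ⟨2 * r - 1, by omega, Or.inr ?_⟩
      constructor <;> unfold zig <;> split_ifs <;> omega
    · refine ⟨2 * r, by omega, Or.inl ?_⟩
      constructor <;> unfold zig <;> split_ifs <;> omega
  · by_cases hp : (a + b) % 2 = 0
    · refine ⟨2 * (2 * m - 1 - r) + 1, by omega, Or.inl ?_⟩
      constructor <;> unfold zig <;> split_ifs <;> omega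
    · refine ⟨2 * (2 * m - 1 - r), by omega, Or.inr ?_⟩
      constructor <;> unfold zig <;> split_ifs <;> omega

/-- Walecki: for even `n`, `K_n` decomposes into exactly `n/2`
edge-disjoint Hamiltonian paths. -/
theorem walecki_decomposition (n : ℕ) (hn : Even n) :
    ∃ P : List (Σ u v : Fin n, (⊤ : SimpleGraph (Fin n)).Walk u v),
      IsPathDecomp ⊤ P ∧ P.length = n / 2 ∧
      ∀ p ∈ P, p.2.2.IsHamiltonian := by
  obtain ⟨m, rfl⟩ := hn
  rw [← two_mul]
  have key : ∀ i : Fin m, ∃ p : (Σ u v : Fin (2 * m), (⊤ : SimpleGraph (Fin (2 * m))).Walk u v),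
      p.2.2.IsHamiltonian ∧ ∀ a b : Fin (2 * m), s(a, b) ∈ p.2.2.edges ↔ ∃ j, j + 1 < 2 * m ∧
        ((zig m i j = a ∧ zig m i (j+1) = b) ∨ (zig m i j = b ∧ zig m i (j+1) = a)) := by
    intro i
    have hi := i.2
    let f : ℕ → Fin (2 * m) := fun j =>
      if h : zig m i j < 2 * m then ⟨zig m i j, h⟩ else ⟨0, by omega⟩
    have hf : ∀ j, j < 2 * m → (f j : ℕ) = zig m i j := by
      intro j hj
      simp [f, zig_lt hi hj]
    have hinj : ∀ j k, j < 2 * m → k < 2 * m → f j = f k → j = k := by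
      intro j k hj hk h
      refine zig_inj hi hj hk ?_
      rw [← hf j hj, ← hf k hk, h]
    obtain ⟨w, h1, h2⟩ := walk_of_fun (⊤ : SimpleGraph (Fin (2 * m))) f (2 * m - 1) (by
      intro j hj
      rw [top_adj]
      intro h
      have := hinj j (j+1) (by omega) (by omega) h
      omega)
    have hm : 2 * m - 1 + 1 = 2 * m := by omega
    rw [hm] at h1
    refine ⟨⟨_, _, w⟩, ?_, ?_⟩
    · have hp : w.IsPath := by
        rw [Walk.isPath_def, h1]
        refine List.Nodup.map_on ?_ List.nodup_range
        intro x hx y hy h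
        exact hinj x y (List.mem_range.1 hx) (List.mem_range.1 hy) h
      rw [Walk.isHamiltonian_iff_isPath_and_length_eq]
      refine ⟨hp, ?_⟩
      have := congrArg List.length h1
      simp at this
      simp
      omega
    · intro a b
      simp only [h2, List.mem_map, List.mem_range, Sym2.eq_iff, Fin.ext_iff]
      refine exists_congr fun j => ?_
      constructor
      · rintro ⟨hj, h⟩
        rw [hf j (by omega), hf (j+1) (by omega)] at h
        exact ⟨by omega, h⟩
      · rintro ⟨hj, h⟩
        rw [hf j (by omega), hf (j+1) (by omega)]
        exact ⟨by omega, h⟩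
  choose p hp he using key
  refine ⟨(List.finRange m).map p, ⟨?_, ?_, ?_⟩, by simp, ?_⟩
  · intro q hq
    obtain ⟨i, -, rfl⟩ := List.mem_map.1 hq
    exact (hp i).isPath
  · rw [List.pairwise_map]
    refine List.Pairwise.imp ?_ (List.nodup_finRange m)
    intro i k hik e
    induction e using Sym2.ind with
    | _ a b =>
      rw [he, he]
      rintro ⟨j, hj, h⟩ ⟨l, hl, h'⟩
      apply hik
      ext
      have := zig_sum i.2 hj
      have := zig_sum k.2 hl
      have := i.2
      have := k.2
      omega
  · intro e
    induction e using Sym2.ind with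
    | _ a b =>
      simp only [List.mem_map, List.mem_finRange, true_and, exists_exists_eq_and, he]
      rw [mem_edgeSet, top_adj]
      constructor
      · intro hab
        have hab' : (a : ℕ) ≠ b := fun h => hab (Fin.ext h)
        rcases lt_or_gt_of_ne hab' with h | h
        · obtain ⟨i, hi, j, hj, h⟩ := zig_cover a.2 b.2 h
          exact ⟨⟨i, hi⟩, j, hj, h⟩
        · obtain ⟨i, hi, j, hj, h⟩ := zig_cover b.2 a.2 h
          exact ⟨⟨i, hi⟩, j, hj, h.symm⟩
      · rintro ⟨i, j, hj, h⟩ rfl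
        have : j = j + 1 := zig_inj i.2 (by omega) hj (by omega)
        omega
  · intro q hq
    obtain ⟨i, -, rfl⟩ := List.mem_map.1 hq
    exact hp i
end

section
/- Let n ≥ 3 and let G be the graph obtained from K_n by deleting the edges of a star with m edges centered at a fixed vertex v, where 1 ≤ m ≤ n−2. Then G is connected and admits a path decomposition into at most ⌊(n+1)/2⌋ paths. -/
open SimpleGraph

namespace GStar

/-- consecutive (unordered) in a list -/
def C {V : Type*} : List V → V → V → Prop
  | [], _, _ => False
  | [_], _, _ => False
  | x :: y :: l, a, b => (a = x ∧ b = y) ∨ (a = y ∧ b = x) ∨ C (y :: l) a b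

lemma C_cons2 {V : Type*} (x y : V) (l : List V) (a b : V) :
    C (x :: y :: l) a b ↔ (a = x ∧ b = y) ∨ (a = y ∧ b = x) ∨ C (y :: l) a b := Iff.rfl

lemma C_map {V W : Type*} (φ : V → W) (l : List V) (a b : W) :
    C (l.map φ) a b ↔ ∃ a' b', C l a' b' ∧ φ a' = a ∧ φ b' = b := by
  induction l with
  | nil => simp [C]
  | cons x l ih =>
    cases l with
    | nil => simp [C]
    | cons y l =>
      simp only [List.map_cons, C_cons2] at ih ⊢
      rw [ih]
      constructor
      · rintro (⟨rfl, rfl⟩ | ⟨rfl, rfl⟩ | ⟨a', b', h, rfl, rfl⟩)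
        · exact ⟨x, y, by simp⟩
        · exact ⟨y, x, by simp⟩
        · exact ⟨a', b', by simp [h]⟩
      · rintro ⟨a', b', (⟨rfl, rfl⟩ | ⟨rfl, rfl⟩ | h), rfl, rfl⟩
        · simp
        · simp
        · exact Or.inr (Or.inr ⟨a', b', h, rfl, rfl⟩)

lemma C_range {V : Type*} (f : ℕ → V) (m : ℕ) (a b : V) :
    C ((List.range m).map f) a b ↔
      ∃ p, p + 1 < m ∧ ((a = f p ∧ b = f (p+1)) ∨ (a = f (p+1) ∧ b = f p)) := by
  induction m generalizing f with
  | zero => simp [C]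
  | succ m ih =>
    cases m with
    | zero => simp [C]
    | succ m =>
      have h1 : (List.range (m+1+1)).map f = f 0 :: (List.range (m+1)).map (fun p => f (p+1)) := by
        rw [List.range_succ_eq_map]; simp [Function.comp_def]
      have h2 : (List.range (m+1)).map (fun p => f (p+1))
          = f 1 :: (List.range m).map (fun p => f (p+1+1)) := by
        rw [List.range_succ_eq_map]; simp [Function.comp_def]
      have ih' := ih (fun p => f (p+1))
      rw [h1, h2, C_cons2, ← h2, ih']
      constructor
      · rintro (h | h | ⟨p, hp, h⟩)
        · exact ⟨0, by omega, Or.inl h⟩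
        · exact ⟨0, by omega, Or.inr h⟩
        · exact ⟨p+1, by omega, h⟩
      · rintro ⟨p, hp, h⟩
        cases p with
        | zero => rcases h with h | h <;> simp_all
        | succ p => exact Or.inr (Or.inr ⟨p, by omega, h⟩)

lemma C_cons_range {V : Type*} (x : V) (f : ℕ → V) (m : ℕ) (hm : 1 ≤ m) (a b : V) :
    C (x :: (List.range m).map f) a b ↔
      (a = x ∧ b = f 0) ∨ (a = f 0 ∧ b = x) ∨ C ((List.range m).map f) a b := by
  obtain ⟨m, rfl⟩ : ∃ m', m = m' + 1 := ⟨m - 1, by omega⟩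
  have h2 : (List.range (m+1)).map f
          = f 0 :: (List.range m).map (fun p => f (p+1)) := by
        rw [List.range_succ_eq_map]; simp [Function.comp_def]
  rw [h2, C_cons2]

lemma nodup_range {V : Type*} (f : ℕ → V) (m : ℕ)
    (h : ∀ p q, p < m → q < m → f p = f q → p = q) : ((List.range m).map f).Nodup := by
  apply List.Nodup.map_on _ List.nodup_range
  intro x hx y hy hxy
  exact h x y (by simpa using hx) (by simpa using hy) hxy

lemma exists_walk {V : Type*} (G : SimpleGraph V) (l : List V) (x : V)
    (h : ∀ a b, C (x :: l) a b → G.Adj a b) :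
    ∃ (y : V) (p : G.Walk x y), p.support = x :: l ∧ ∀ a b, s(a,b) ∈ p.edges ↔ C (x :: l) a b := by
  induction l generalizing x with
  | nil => exact ⟨x, Walk.nil, by simp, by simp [C]⟩
  | cons y l ih =>
    obtain ⟨z, p, h1, h2⟩ := ih y (fun a b hab => h a b (Or.inr (Or.inr hab)))
    refine ⟨z, Walk.cons (h x y (Or.inl ⟨rfl, rfl⟩)) p, by simp [h1], ?_⟩
    intro a b
    rw [Walk.edges_cons, List.mem_cons, h2, C_cons2, Sym2.eq_iff, or_assoc]

/-- combinatorial decomposition -/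
def Good (n d K : ℕ) : Prop :=
  ∃ (v0 : ℕ) (B : Finset ℕ) (L : ℕ → List ℕ), v0 < n ∧ v0 ∉ B ∧ B ⊆ Finset.range n ∧ B.card = d ∧
    (∀ i < K, (L i).Nodup ∧ L i ≠ []) ∧
    (∀ i < K, ∀ j < K, ∀ a b, C (L i) a b → C (L j) a b → i = j) ∧
    (∀ i < K, ∀ a ∈ L i, a < n) ∧
    (∀ a b, (∃ i < K, C (L i) a b) ↔
      a < n ∧ b < n ∧ a ≠ b ∧ (a = v0 → b ∈ B) ∧ (b = v0 → a ∈ B))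

/-- zigzag -/
def z (k i p : ℕ) : ℕ :=
  if p % 2 = 1 then i + (p+1)/2 else if p / 2 ≤ i then i - p/2 else i + 2*k - p/2

def base (k i a b : ℕ) : Prop :=
  a ≠ b ∧ a < 2*k ∧ b < 2*k ∧ (a+b = 2*i ∨ a+b = 2*i+1 ∨ a+b = 2*i+2*k ∨ a+b=2*i+2*k+1)

lemma z_inj (k i p q : ℕ) (hi : i < k) (hp : p < 2*k) (hq : q < 2*k) (h : z k i p = z k i q) :
    p = q := by
  unfold z at h; split_ifs at h <;> omega

lemma z_lt (k i p : ℕ) (hi : i < k) (hp : p < 2*k) : z k i p < 2*k := by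
  unfold z; split_ifs <;> omega

lemma z_base (k i p : ℕ) (hi : i < k) (hp : p+1 < 2*k) : base k i (z k i p) (z k i (p+1)) := by
  unfold base z; split_ifs <;> omega

lemma base_symm {k i a b : ℕ} (h : base k i a b) : base k i b a := by
  unfold base at *; omega

lemma base_z (k i a b : ℕ) (hi : i < k) (h : base k i a b) :
    ∃ p, p+1 < 2*k ∧ ((a = z k i p ∧ b = z k i (p+1)) ∨ (a = z k i (p+1) ∧ b = z k i p)) := by
  have key : ∃ p q, p < 2*k ∧ q < 2*k ∧ a = z k i p ∧ b = z k i q := by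
    have : ∀ x, x < 2*k → ∃ p, p < 2*k ∧ x = z k i p := by
      intro x hx
      by_cases h1 : x ≤ i
      · exact ⟨2*(i-x), by omega, by unfold z; split_ifs <;> omega⟩
      · by_cases h2 : x ≤ i + k
        · exact ⟨2*(x-i)-1, by omega, by unfold z; split_ifs <;> omega⟩
        · exact ⟨2*(i+2*k-x), by omega, by unfold z; split_ifs <;> omega⟩
    obtain ⟨p, hp, h1⟩ := this a h.2.1
    obtain ⟨q, hq, h2⟩ := this b h.2.2.1
    exact ⟨p, q, hp, hq, h1, h2⟩
  obtain ⟨p, q, hp, hq, ha, hb⟩ := key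
  have : q = p + 1 ∨ p = q + 1 := by
    rw [ha, hb] at h
    unfold base z at h
    split_ifs at h <;> omega
  rcases this with rfl | rfl
  · exact ⟨p, hq, Or.inl ⟨ha, hb⟩⟩
  · exact ⟨q, hp, Or.inr ⟨ha, hb⟩⟩

lemma z_zero (k i : ℕ) : z k i 0 = i := by simp [z]
lemma z_one (k i : ℕ) : z k i 1 = i + 1 := by simp [z]
lemma z_last (k i : ℕ) (hk : 1 ≤ k) : z k i (2*k-1) = i + k := by
  unfold z; split_ifs <;> omega
lemma z_last2 (k i : ℕ) (hi : i + 1 < k) : z k i (2*k-2) = i + k + 1 := by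
  unfold z; split_ifs <;> omega

def full (k i : ℕ) : List ℕ := (List.range (2*k)).map (z k i)
def revS (k i : ℕ) : List ℕ := (List.range (2*k-1)).map (fun p => z k i (2*k-1-p))
def fwdS (k i : ℕ) : List ℕ := (List.range (2*k-1)).map (fun p => z k i (p+1))
def mid (k i : ℕ) : List ℕ := (List.range (2*k-2)).map (fun p => z k i (p+1))
def rmid (k i : ℕ) : List ℕ := (List.range (2*k-2)).map (fun p => z k i (2*k-2-p))

def pr (x y a b : ℕ) : Prop := (a = x ∧ b = y) ∨ (a = y ∧ b = x)

lemma C_full (k i a b : ℕ) (hi : i < k) : C (full k i) a b ↔ base k i a b := by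
  unfold full
  rw [C_range]
  constructor
  · rintro ⟨p, hp, ⟨rfl, rfl⟩ | ⟨rfl, rfl⟩⟩
    · exact z_base k i p hi hp
    · exact base_symm (z_base k i p hi hp)
  · exact base_z k i a b hi

lemma pz (k i a b p q : ℕ) (hi : i < k) (hp : p + 1 < 2*k) (hq : q + 1 < 2*k)
    (h : pr (z k i p) (z k i (p+1)) a b) (h' : pr (z k i q) (z k i (q+1)) a b) : p = q := by
  unfold pr at h h'
  have i1 := z_inj k i p q hi (by omega) (by omega)
  have i2 := z_inj k i p (q+1) hi (by omega) (by omega)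
  have i3 := z_inj k i (p+1) q hi (by omega) (by omega)
  have i4 := z_inj k i (p+1) (q+1) hi (by omega) (by omega)
  omega

lemma base_iff (k i a b : ℕ) (hi : i < k) :
    base k i a b ↔ ∃ p, p+1 < 2*k ∧ pr (z k i p) (z k i (p+1)) a b := by
  rw [← C_full k i a b hi, full, C_range]; rfl

lemma C_fwdS (k i a b : ℕ) (hi : i < k) :
    C (fwdS k i) a b ↔ base k i a b ∧ ¬ pr i (i+1) a b := by
  rw [base_iff k i a b hi, fwdS, C_range]
  constructor
  · rintro ⟨p, hp, h⟩
    refine ⟨⟨p+1, by omega, h⟩, fun h' => ?_⟩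
    have := pz k i a b (p+1) 0 hi (by omega) (by omega) h (by rw [z_zero, z_one]; exact h')
    omega
  · rintro ⟨⟨p, hp, h⟩, h'⟩
    rcases p with _ | p
    · rw [z_zero, z_one] at h; exact absurd h h'
    · exact ⟨p, by omega, h⟩

lemma C_revS (k i a b : ℕ) (hi : i < k) :
    C (revS k i) a b ↔ base k i a b ∧ ¬ pr i (i+1) a b := by
  rw [← C_fwdS k i a b hi, fwdS, revS, C_range, C_range]
  constructor
  · rintro ⟨p, hp, h⟩
    refine ⟨2*k-1-(p+1)-1, by omega, ?_⟩
    rw [show 2*k-1-(p+1)-1+1 = 2*k-1-(p+1) by omega, show 2*k-1-(p+1)+1 = 2*k-1-p by omega]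
    tauto
  · rintro ⟨p, hp, h⟩
    refine ⟨2*k-1-(p+1+1), by omega, ?_⟩
    rw [show 2*k-1-(2*k-1-(p+1+1)) = p+1+1 by omega,
      show 2*k-1-(2*k-1-(p+1+1)+1) = p+1 by omega]
    tauto

lemma C_mid (k i a b : ℕ) (hi : i + 1 < k) :
    C (mid k i) a b ↔ base k i a b ∧ ¬ pr i (i+1) a b ∧ ¬ pr (i+k) (i+k+1) a b := by
  have hl := z_last k i (by omega)
  have hl2 := z_last2 k i hi
  rw [base_iff k i a b (by omega), mid, C_range]
  constructor
  · rintro ⟨p, hp, h⟩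
    refine ⟨⟨p+1, by omega, h⟩, fun h' => ?_, fun h' => ?_⟩
    · have := pz k i a b (p+1) 0 (by omega) (by omega) (by omega) h
        (by rw [z_zero, z_one]; exact h')
      omega
    · have := pz k i a b (p+1) (2*k-2) (by omega) (by omega) (by omega) h
        (by rw [show 2*k-2+1 = 2*k-1 by omega, hl, hl2]; unfold pr at *; tauto)
      omega
  · rintro ⟨⟨p, hp, h⟩, h', h''⟩
    rcases p with _ | p
    · rw [z_zero, z_one] at h; exact absurd h h'
    · refine ⟨p, ?_, h⟩
      by_contra hc
      apply h''
      rw [show p + 1 = 2*k-2 by omega, show 2*k-2+1 = 2*k-1 by omega, hl, hl2] at h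
      unfold pr at *; tauto

lemma C_rmid (k i a b : ℕ) (hi : i + 1 < k) :
    C (rmid k i) a b ↔ base k i a b ∧ ¬ pr i (i+1) a b ∧ ¬ pr (i+k) (i+k+1) a b := by
  rw [← C_mid k i a b hi, mid, rmid, C_range, C_range]
  constructor
  · rintro ⟨p, hp, h⟩
    refine ⟨2*k-2-(p+1)-1, by omega, ?_⟩
    rw [show 2*k-2-(p+1)-1+1 = 2*k-2-(p+1) by omega, show 2*k-2-(p+1)+1 = 2*k-2-p by omega]
    tauto
  · rintro ⟨p, hp, h⟩
    refine ⟨2*k-2-(p+1+1), by omega, ?_⟩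
    rw [show 2*k-2-(2*k-2-(p+1+1)) = p+1+1 by omega,
      show 2*k-2-(2*k-2-(p+1+1)+1) = p+1 by omega]
    tauto

lemma nd_full (k i : ℕ) (hi : i < k) : (full k i).Nodup :=
  nodup_range _ _ fun p q hp hq h => z_inj k i p q hi hp hq h
lemma nd_revS (k i : ℕ) (hi : i < k) : (revS k i).Nodup :=
  nodup_range _ _ fun p q hp hq h => by
    have := z_inj k i _ _ hi (by omega) (by omega) h; omega
lemma nd_fwdS (k i : ℕ) (hi : i < k) : (fwdS k i).Nodup :=
  nodup_range _ _ fun p q hp hq h => by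
    have := z_inj k i _ _ hi (by omega) (by omega) h; omega
lemma nd_mid (k i : ℕ) (hi : i < k) : (mid k i).Nodup :=
  nodup_range _ _ fun p q hp hq h => by
    have := z_inj k i _ _ hi (by omega) (by omega) h; omega
lemma nd_rmid (k i : ℕ) (hi : i < k) : (rmid k i).Nodup :=
  nodup_range _ _ fun p q hp hq h => by
    have := z_inj k i _ _ hi (by omega) (by omega) h; omega

lemma mem_full {k i x : ℕ} (hi : i < k) (h : x ∈ full k i) : x < 2*k := by
  simp only [full, List.mem_map, List.mem_range] at h
  obtain ⟨p, hp, rfl⟩ := h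
  exact z_lt k i _ hi (by omega)
lemma mem_fwdS {k i x : ℕ} (hi : i < k) (h : x ∈ fwdS k i) : x < 2*k ∧ x ≠ i := by
  simp only [fwdS, List.mem_map, List.mem_range] at h
  obtain ⟨p, hp, rfl⟩ := h
  refine ⟨z_lt k i _ hi (by omega), fun h => ?_⟩
  have := z_inj k i _ 0 hi (by omega) (by omega) (h.trans (z_zero k i).symm)
  omega
lemma mem_revS {k i x : ℕ} (hi : i < k) (h : x ∈ revS k i) : x < 2*k ∧ x ≠ i := by
  simp only [revS, List.mem_map, List.mem_range] at h
  obtain ⟨p, hp, rfl⟩ := h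
  refine ⟨z_lt k i _ hi (by omega), fun h => ?_⟩
  have := z_inj k i _ 0 hi (by omega) (by omega) (h.trans (z_zero k i).symm)
  omega
lemma mem_mid {k i x : ℕ} (hi : i < k) (h : x ∈ mid k i) : x < 2*k ∧ x ≠ i ∧ x ≠ i+k := by
  simp only [mid, List.mem_map, List.mem_range] at h
  obtain ⟨p, hp, rfl⟩ := h
  refine ⟨z_lt k i _ hi (by omega), fun h => ?_, fun h => ?_⟩
  · have := z_inj k i _ 0 hi (by omega) (by omega) (h.trans (z_zero k i).symm)
    omega
  · have := z_inj k i _ (2*k-1) hi (by omega) (by omega) (h.trans (z_last k i (by omega)).symm)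
    omega
lemma mem_rmid {k i x : ℕ} (hi : i < k) (h : x ∈ rmid k i) : x < 2*k ∧ x ≠ i ∧ x ≠ i+k := by
  simp only [rmid, List.mem_map, List.mem_range] at h
  obtain ⟨p, hp, rfl⟩ := h
  refine ⟨z_lt k i _ hi (by omega), fun h => ?_, fun h => ?_⟩
  · have := z_inj k i _ 0 hi (by omega) (by omega) (h.trans (z_zero k i).symm)
    omega
  · have := z_inj k i _ (2*k-1) hi (by omega) (by omega) (h.trans (z_last k i (by omega)).symm)
    omega

lemma C_cons_full (x k i a b : ℕ) (hi : i < k) :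
    C (x :: full k i) a b ↔ pr x i a b ∨ C (full k i) a b := by
  rw [full, C_cons_range _ _ _ (by omega), z_zero, pr, or_assoc]
lemma C_cons_revS (x k i a b : ℕ) (hi : i < k) :
    C (x :: revS k i) a b ↔ pr x (i+k) a b ∨ C (revS k i) a b := by
  rw [revS, C_cons_range _ _ _ (by omega), Nat.sub_zero, z_last _ _ (by omega), pr, or_assoc]
lemma C_cons_mid (x k i a b : ℕ) (hi : i + 1 < k) :
    C (x :: mid k i) a b ↔ pr x (i+1) a b ∨ C (mid k i) a b := by
  rw [mid, C_cons_range _ _ _ (by omega), zero_add, z_one, pr, or_assoc]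
lemma C_cons_rmid (x k i a b : ℕ) (hi : i + 1 < k) :
    C (x :: rmid k i) a b ↔ pr x (i+k+1) a b ∨ C (rmid k i) a b := by
  rw [rmid, C_cons_range _ _ _ (by omega), Nat.sub_zero, z_last2 _ _ hi, pr, or_assoc]

lemma C_id (m a b : ℕ) : C (List.range (m+1)) a b ↔ (b = a+1 ∧ a < m) ∨ (a = b+1 ∧ b < m) := by
  have := C_range (id : ℕ → ℕ) (m+1) a b
  rw [List.map_id] at this
  rw [this]
  constructor
  · rintro ⟨p, hp, h⟩; simp only [id] at h; omega
  · rintro (h | h)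
    · exact ⟨a, by omega, Or.inl ⟨rfl, h.1⟩⟩
    · exact ⟨b, by omega, Or.inr ⟨h.1, rfl⟩⟩

/-- odd number of vertices -/
lemma good_odd (k d : ℕ) (hk : 1 ≤ k) (hd : d < 2*k) : Good (2*k+1) d (k+1) := by
  let L : ℕ → List ℕ := fun i =>
    if i = k then List.range (d-k+1) else if i + k < d then i :: 2*k :: revS k i
    else if i < d then 2*k :: full k i else full k i
  have hE : L k = List.range (d-k+1) := by simp [L]
  have hL : ∀ i < k, ∀ a b, C (L i) a b ↔ (base k i a b ∧ ¬ (i + k < d ∧ pr i (i+1) a b)) ∨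
      (i < d ∧ pr (2*k) i a b) ∨ (i + k < d ∧ pr (2*k) (i+k) a b) := by
    intro i hi a b
    simp only [L]
    split_ifs with h1 h2 h3
    · omega
    · rw [C_cons2, C_cons_revS _ _ _ _ _ hi, C_revS _ _ _ _ hi]; unfold pr; grind
    · rw [C_cons_full _ _ _ _ _ hi, C_full _ _ _ _ hi]; grind
    · rw [C_full _ _ _ _ hi]; grind
  refine ⟨2*k, Finset.range d, L, by omega, by simp; omega, ?_, by simp, ?_, ?_, ?_, ?_⟩
  · intro x; simp; omega
  · intro i hi
    simp only [L]
    split_ifs with h1 h2 h3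
    · exact ⟨List.nodup_range, by simp⟩
    · refine ⟨?_, by simp⟩
      rw [List.nodup_cons, List.nodup_cons, List.mem_cons]
      refine ⟨?_, fun h => ?_, nd_revS k i (by omega)⟩
      · rintro (h | h)
        · omega
        · have := mem_revS (by omega) h; omega
      · have := mem_revS (by omega) h; omega
    · refine ⟨?_, by simp⟩
      rw [List.nodup_cons]
      refine ⟨fun h => ?_, nd_full k i (by omega)⟩
      have := mem_full (by omega) h; omega
    · refine ⟨nd_full k i (by omega), ?_⟩
      simp [full]; omega
  · intro i hi j hj a b h1 h2
    rcases Nat.lt_succ_iff_lt_or_eq.mp hi with hi' | rfl <;>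
    rcases Nat.lt_succ_iff_lt_or_eq.mp hj with hj' | rfl
    · rw [hL _ hi'] at h1; rw [hL _ hj'] at h2
      unfold base pr at h1 h2; omega
    · rw [hL _ hi'] at h1; rw [hE, C_id] at h2
      unfold base pr at h1; omega
    · rw [hL _ hj'] at h2; rw [hE, C_id] at h1
      unfold base pr at h2; omega
    · rfl
  · intro i hi a
    simp only [L]
    split_ifs with h1 h2 h3
    · simp; omega
    · simp only [List.mem_cons]
      rintro (h | h | h)
      · omega
      · omega
      · have := mem_revS (by omega) h; omega
    · simp only [List.mem_cons]
      rintro (h | h)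
      · omega
      · have := mem_full (by omega) h; omega
    · intro h; have := mem_full (by omega) h; omega
  · intro a b
    simp only [Finset.mem_range]
    constructor
    · rintro ⟨i, hi, h⟩
      rcases Nat.lt_succ_iff_lt_or_eq.mp hi with hi' | rfl
      · rw [hL _ hi'] at h; unfold base pr at h; omega
      · rw [hE, C_id] at h; omega
    · intro h
      by_cases hE' : C (L k) a b
      · exact ⟨k, by omega, hE'⟩
      rw [hE, C_id] at hE'
      have : ∃ i < k, (base k i a b ∧ ¬ (i + k < d ∧ pr i (i+1) a b)) ∨
          (i < d ∧ pr (2*k) i a b) ∨ (i + k < d ∧ pr (2*k) (i+k) a b) := by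
        unfold base pr
        by_cases ha : a = 2*k
        · by_cases hb : b < k
          · exact ⟨b, hb, by omega⟩
          · exact ⟨b-k, by omega, by omega⟩
        by_cases hb : b = 2*k
        · by_cases hb : a < k
          · exact ⟨a, hb, by omega⟩
          · exact ⟨a-k, by omega, by omega⟩
        by_cases hc : (a+b)/2 < k
        · exact ⟨(a+b)/2, hc, by omega⟩
        · exact ⟨(a+b)/2-k, by omega, by omega⟩
      obtain ⟨i, hi, h⟩ := this
      exact ⟨i, by omega, (hL i hi a b).2 h⟩

/-- even number of vertices, one missing edge -/
lemma good_even1 (k : ℕ) (hk : 2 ≤ k) : Good (2*k) (2*k-2) k := by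
  let L : ℕ → List ℕ := fun i => if i = 0 then fwdS k i else full k i
  have hL : ∀ i < k, ∀ a b, C (L i) a b ↔ (base k i a b ∧ ¬ (i = 0 ∧ pr 0 1 a b)) := by
    intro i hi a b
    simp only [L]
    split_ifs with h1
    · rw [C_fwdS _ _ _ _ hi]; subst h1; simp
    · rw [C_full _ _ _ _ hi]; grind
  refine ⟨0, Finset.Ico 2 (2*k), L, by omega, by simp, ?_, by simp, ?_, ?_, ?_, ?_⟩
  · intro x; simp
  · intro i hi
    simp only [L]
    split_ifs with h1
    · exact ⟨nd_fwdS k i hi, by simp [fwdS]; omega⟩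
    · exact ⟨nd_full k i hi, by simp [full]; omega⟩
  · intro i hi j hj a b h1 h2
    rw [hL _ hi] at h1; rw [hL _ hj] at h2
    unfold base pr at h1 h2; omega
  · intro i hi a
    simp only [L]
    split_ifs with h1
    · intro h; exact (mem_fwdS hi h).1
    · intro h; exact mem_full hi h
  · intro a b
    simp only [Finset.mem_Ico]
    constructor
    · rintro ⟨i, hi, h⟩
      rw [hL _ hi] at h; unfold base pr at h; omega
    · intro h
      have : ∃ i < k, (base k i a b ∧ ¬ (i = 0 ∧ pr 0 1 a b)) := by
        unfold base pr
        by_cases hc : (a+b)/2 < k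
        · exact ⟨(a+b)/2, hc, by omega⟩
        · exact ⟨(a+b)/2-k, by omega, by omega⟩
      obtain ⟨i, hi, h⟩ := this
      exact ⟨i, by omega, (hL i hi a b).2 h⟩

/-- neighbours of `v` in the `i`-th path -/
def VV (k d t i x : ℕ) : Prop :=
  (i < t ∧ (t-i) % 2 = 0 ∧ (x = i ∨ x = i+1)) ∨
  (i < t ∧ (t-i) % 2 = 1 ∧ (x = i+k ∨ x = i+k+1)) ∨ (t ≤ i ∧ i < d ∧ x = i)

lemma VV_lt {k d t i x : ℕ} (ht : t < k) (hi : i < k) (h : VV k d t i x) : x < 2*k := by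
  unfold VV at h; omega

lemma VV_mem {k d t i x : ℕ} (ht : t = d - k) (hd : d < 2*k) (hi : i < k) (h : VV k d t i x) :
    (t%2 ≤ x ∧ x < k ∧ x < d) ∨ (k+(1-t%2) ≤ x ∧ x < k+t+1) := by
  unfold VV at h; rcases h with h | h | h <;> omega

lemma VV_uniq {k d t i j x : ℕ} (ht : t < k) (hi : i < k) (hj : j < k)
    (h : VV k d t i x) (h' : VV k d t j x) : i = j := by
  unfold VV at h h'
  rcases h with h | h | h <;> rcases h' with h' | h' | h' <;> omega

def FF (k d t i a b : ℕ) : Prop :=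
  (base k i a b ∧ ¬ pr i (i+1) a b ∧ ¬ (i < t ∧ pr (i+k) (i+k+1) a b)) ∨
  (a = 2*k ∧ (b = i ∨ b = i+k)) ∨ (b = 2*k ∧ (a = i ∨ a = i+k)) ∨
  (a = 2*k+1 ∧ VV k d t i b) ∨ (b = 2*k+1 ∧ VV k d t i a)

lemma FF_uniq {k d t i j a b : ℕ} (ht : t < k) (hi : i < k) (hj : j < k)
    (h : FF k d t i a b) (h' : FF k d t j a b) : i = j := by
  rcases h with ⟨h, -⟩ | h | h | ⟨h, g⟩ | ⟨h, g⟩ <;>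
  rcases h' with ⟨h', -⟩ | h' | h' | ⟨h', g'⟩ | ⟨h', g'⟩ <;>
  first
  | exact VV_uniq ht hi hj g g'
  | (try have e1 := VV_lt ht hi g
     try have e2 := VV_lt ht hj g'
     try unfold base at h
     try unfold base at h'
     clear * - h h' ht hi hj
     omega)
  | (have e1 := VV_lt ht hi g
     try unfold base at h'
     omega)
  | (have e2 := VV_lt ht hj g'
     try unfold base at h
     omega)

lemma FF_E {k d t i a b : ℕ} (ht : t < k) (hi : i < k)
    (h : FF k d t i a b) (h' : (b = a+1 ∧ a < k+t) ∨ (a = b+1 ∧ b < k+t)) : False := by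
  rcases h with h | h | h | ⟨h, g⟩ | ⟨h, g⟩
  · unfold base pr at h; omega
  · omega
  · omega
  · omega
  · omega

set_option maxHeartbeats 1000000 in
/-- even number of vertices, general -/
lemma good_even2 (k d : ℕ) (hk : 1 ≤ k) (hd : d < 2*k) : Good (2*k+2) d (k+1) := by
  obtain ⟨t, ht⟩ : ∃ t, t = d - k := ⟨_, rfl⟩
  let L : ℕ → List ℕ := fun i =>
    if i = k then List.range (k+t+1) else
    if i < t then
      if (t-i) % 2 = 0 then (i+k) :: 2*k :: i :: (2*k+1) :: mid k i
      else i :: 2*k :: (i+k) :: (2*k+1) :: rmid k i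
    else if i < d then (2*k+1) :: i :: 2*k :: revS k i else i :: 2*k :: revS k i
  have hE : L k = List.range (k+t+1) := by simp [L]
  have hL : ∀ i < k, ∀ a b, C (L i) a b ↔ FF k d t i a b := by
    intro i hi a b
    simp only [L, FF, VV]
    split_ifs with h1 h2 h3 h4
    · omega
    · have := Nat.not_le.mpr h2
      rw [C_cons2, C_cons2, C_cons2, C_cons_mid _ _ _ _ _ (by omega), C_mid _ _ _ _ (by omega)]
      unfold pr; grind
    · have := Nat.not_le.mpr h2
      have h3' : (t-i) % 2 = 1 := by omega
      rw [C_cons2, C_cons2, C_cons2, C_cons_rmid _ _ _ _ _ (by omega), C_rmid _ _ _ _ (by omega)]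
      unfold pr; grind
    · have := Nat.not_lt.mp h2
      rw [C_cons2, C_cons2, C_cons_revS _ _ _ _ _ hi, C_revS _ _ _ _ hi]; unfold pr; grind
    · rw [C_cons2, C_cons_revS _ _ _ _ _ hi, C_revS _ _ _ _ hi]; unfold pr; grind
  refine ⟨2*k+1, Finset.Ico (t%2) (min k d) ∪ Finset.Ico (k+(1-t%2)) (k+t+1), L, by omega,
    by simp; omega, ?_, ?_, ?_, ?_, ?_, ?_⟩
  · intro x; simp; omega
  · rw [Finset.card_union_of_disjoint]
    · simp; omega
    · rw [Finset.disjoint_left]; intro x; simp; omega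
  · intro i hi
    simp only [L]
    split_ifs with h1 h2 h3 h4
    · exact ⟨List.nodup_range, by simp⟩
    · refine ⟨?_, by simp⟩
      have hm := fun x => @mem_mid k i x (by omega)
      have hn := nd_mid k i (by omega)
      simp only [List.nodup_cons, List.mem_cons]
      refine ⟨?_, ?_, ?_, ?_, hn⟩
      · rintro (h | h | h | h)
        · omega
        · omega
        · omega
        · have := hm _ h; omega
      · rintro (h | h | h)
        · omega
        · omega
        · have := hm _ h; omega
      · rintro (h | h)
        · omega
        · have := hm _ h; omega
      · intro h
        have := hm _ h; omega
    · refine ⟨?_, by simp⟩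
      have hm := fun x => @mem_rmid k i x (by omega)
      have hn := nd_rmid k i (by omega)
      simp only [List.nodup_cons, List.mem_cons]
      refine ⟨?_, ?_, ?_, ?_, hn⟩
      · rintro (h | h | h | h)
        · omega
        · omega
        · omega
        · have := hm _ h; omega
      · rintro (h | h | h)
        · omega
        · omega
        · have := hm _ h; omega
      · rintro (h | h)
        · omega
        · have := hm _ h; omega
      · intro h
        have := hm _ h; omega
    · refine ⟨?_, by simp⟩
      have hm := fun x => @mem_revS k i x (by omega)
      have hn := nd_revS k i (by omega)
      simp only [List.nodup_cons, List.mem_cons]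
      refine ⟨?_, ?_, ?_, hn⟩
      · rintro (h | h | h)
        · omega
        · omega
        · have := hm _ h; omega
      · rintro (h | h)
        · omega
        · have := hm _ h; omega
      · intro h
        have := hm _ h; omega
    · refine ⟨?_, by simp⟩
      have hm := fun x => @mem_revS k i x (by omega)
      have hn := nd_revS k i (by omega)
      simp only [List.nodup_cons, List.mem_cons]
      refine ⟨?_, ?_, hn⟩
      · rintro (h | h)
        · omega
        · have := hm _ h; omega
      · intro h
        have := hm _ h; omega
  · intro i hi j hj a b h1 h2
    rcases Nat.lt_succ_iff_lt_or_eq.mp hi with hi' | rfl <;>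
    rcases Nat.lt_succ_iff_lt_or_eq.mp hj with hj' | rfl
    · rw [hL _ hi'] at h1; rw [hL _ hj'] at h2
      exact FF_uniq (by omega) hi' hj' h1 h2
    · rw [hL _ hi'] at h1; rw [hE, C_id] at h2
      exact (FF_E (by omega) hi' h1 h2).elim
    · rw [hL _ hj'] at h2; rw [hE, C_id] at h1
      exact (FF_E (by omega) hj' h2 h1).elim
    · rfl
  · intro i hi a
    simp only [L]
    split_ifs with h1 h2 h3
    · simp; omega
    · simp only [List.mem_cons]
      rintro (h | h | h | h | h)
      iterate 4 omega
      have := mem_mid (by omega) h; omega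
    · simp only [List.mem_cons]
      rintro (h | h | h | h | h)
      iterate 4 omega
      have := mem_rmid (by omega) h; omega
    · simp only [List.mem_cons]
      rintro (h | h | h | h)
      iterate 3 omega
      have := mem_revS (by omega) h; omega
    · simp only [List.mem_cons]
      rintro (h | h | h)
      iterate 2 omega
      have := mem_revS (by omega) h; omega
  · intro a b
    simp only [Finset.mem_union, Finset.mem_Ico, lt_min_iff]
    constructor
    · rintro ⟨i, hi, h⟩
      rcases Nat.lt_succ_iff_lt_or_eq.mp hi with hi' | rfl
      · rw [hL _ hi'] at h
        rcases h with ⟨h, -⟩ | h | h | ⟨h, g⟩ | ⟨h, g⟩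
        · unfold base at h; omega
        · omega
        · omega
        · have := VV_mem ht hd hi' g
          omega
        · have := VV_mem ht hd hi' g
          omega
      · rw [hE, C_id] at h; omega
    · intro h
      by_cases hE' : C (L k) a b
      · exact ⟨k, by omega, hE'⟩
      rw [hE, C_id] at hE'
      have hv : ∀ x, (t%2 ≤ x ∧ x < k ∧ x < d) ∨ (k+(1-t%2) ≤ x ∧ x < k+t+1) →
          ∃ i < k, VV k d t i x := by
        unfold VV
        intro x hx
        by_cases hxt : t ≤ x ∧ x < k
        · exact ⟨x, by omega, by omega⟩
        by_cases hxk : x < k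
        · by_cases hp : (t-x) % 2 = 0
          · exact ⟨x, by omega, by omega⟩
          · exact ⟨x-1, by omega, by omega⟩
        · by_cases hp : x - k < t ∧ (t-(x-k)) % 2 = 1
          · exact ⟨x-k, by omega, by omega⟩
          · exact ⟨x-k-1, by omega, by omega⟩
      have : ∃ i < k, FF k d t i a b := by
        unfold FF
        by_cases ha : a = 2*k+1
        · obtain ⟨i, hi, h'⟩ := hv b (h.2.2.2.1 ha)
          exact ⟨i, hi, Or.inr (Or.inr (Or.inr (Or.inl ⟨ha, h'⟩)))⟩
        by_cases hb : b = 2*k+1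
        · obtain ⟨i, hi, h'⟩ := hv a (h.2.2.2.2 hb)
          exact ⟨i, hi, Or.inr (Or.inr (Or.inr (Or.inr ⟨hb, h'⟩)))⟩
        by_cases ha : a = 2*k
        · by_cases hb : b < k
          · exact ⟨b, hb, Or.inr (Or.inl ⟨ha, by omega⟩)⟩
          · exact ⟨b-k, by omega, Or.inr (Or.inl ⟨ha, by omega⟩)⟩
        by_cases hb : b = 2*k
        · by_cases hb' : a < k
          · exact ⟨a, hb', Or.inr (Or.inr (Or.inl ⟨hb, by omega⟩))⟩
          · exact ⟨a-k, by omega, Or.inr (Or.inr (Or.inl ⟨hb, by omega⟩))⟩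
        unfold base pr
        by_cases hc : (a+b)/2 < k
        · exact ⟨(a+b)/2, hc, Or.inl (by omega)⟩
        · exact ⟨(a+b)/2-k, by omega, Or.inl (by omega)⟩
      obtain ⟨i, hi, h⟩ := this
      exact ⟨i, by omega, (hL i hi a b).2 h⟩

lemma good (n d : ℕ) (hn : 3 ≤ n) (hd2 : d ≤ n - 2) : Good n d ((n+1)/2) := by
  rcases Nat.even_or_odd' n with ⟨k, rfl | rfl⟩
  · by_cases h : d = 2*k-2
    · rw [h, show (2*k+1)/2 = k by omega]; exact good_even1 k (by omega)
    · have := good_even2 (k-1) d (by omega) (by omega)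
      rw [show (2*k+1)/2 = k by omega]
      rwa [show 2*(k-1)+2 = 2*k by omega, show k-1+1 = k by omega] at this
  · rw [show (2*k+1+1)/2 = k+1 by omega]; exact good_odd k d (by omega) (by omega)

/-- relabelling -/
lemma relabel (n v0 : ℕ) (B : Finset ℕ) (hv0 : v0 < n) (hvB : v0 ∉ B) (hB : B ⊆ Finset.range n)
    (v : Fin n) (A : Finset (Fin n)) (hvA : v ∉ A) (hc : A.card + B.card + 1 = n) :
    ∃ φ : Fin n ≃ Fin n, φ ⟨v0, hv0⟩ = v ∧ ∀ x : Fin n, x ≠ ⟨v0, hv0⟩ → (φ x ∈ A ↔ (x : ℕ) ∉ B) := by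
  classical
  let A' : Finset (Fin n) := (Finset.univ.filter fun x : Fin n => (x : ℕ) ∉ B).erase ⟨v0, hv0⟩
  have hBc : (Finset.univ.filter fun x : Fin n => (x : ℕ) ∈ B).card = B.card := by
    refine Finset.card_bij (fun (x : Fin n) _ => (x : ℕ)) ?_ ?_ ?_
    · intro x; simp
    · intro x _ y _ h; exact Fin.ext h
    · intro b hb; exact ⟨⟨b, by simpa using hB hb⟩, by simpa using hb, rfl⟩
  have hA' : A'.card = A.card := by
    have h1 := Finset.card_filter_add_card_filter_not (s := (Finset.univ : Finset (Fin n)))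
      (fun x : Fin n => (x : ℕ) ∈ B)
    have h2 : A'.card = _ - 1 := Finset.card_erase_of_mem (by simpa using hvB)
    rw [hBc, Finset.card_univ, Fintype.card_fin] at h1
    omega
  have h3 : (insert (⟨v0, hv0⟩ : Fin n) A').card = (insert v A).card := by
    rw [Finset.card_insert_of_notMem (by simp [A']), Finset.card_insert_of_notMem hvA, hA']
  -- equivalence of A' with A extended
  obtain ⟨e⟩ : Nonempty (A' ≃ A) := ⟨Finset.equivOfCardEq hA'⟩
  obtain ⟨φ, hφ⟩ : ∃ φ : Fin n ≃ Fin n, ∀ x : Fin n, x ∈ A' ↔ φ x ∈ A := by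
    refine ⟨e.extendSubtype, fun x => ⟨fun h => e.extendSubtype_mem x h, fun h => ?_⟩⟩
    by_contra hx
    exact e.extendSubtype_not_mem x hx h
  refine ⟨φ.trans (Equiv.swap (φ ⟨v0, hv0⟩) v), by simp, ?_⟩
  intro x hx
  have hw : φ ⟨v0, hv0⟩ ∉ A := by rw [← hφ]; simp [A']
  have : φ x ∈ A ↔ (x : ℕ) ∉ B := by rw [← hφ]; simp [A', hx]
  rw [← this, Equiv.trans_apply]
  have hne : φ x ≠ φ ⟨v0, hv0⟩ := fun h => hx (φ.injective h)
  by_cases hxv : φ x = v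
  · rw [hxv, Equiv.swap_apply_right]; tauto
  · rw [Equiv.swap_apply_of_ne_of_ne hne hxv]

end GStar

open GStar in
/-- Gallai's conjecture holds for `K_n` minus a star with `m ≤ n - 2` edges. -/
theorem gallai_complete_minus_star (n m : ℕ) (hn : 3 ≤ n) (hm1 : 1 ≤ m)
    (hm2 : m ≤ n - 2) (v : Fin n) (A : Finset (Fin n)) (hvA : v ∉ A)
    (hA : A.card = m) :
    ((⊤ : SimpleGraph (Fin n)).deleteEdges {e | ∃ u ∈ A, e = s(v, u)}).Connected ∧
    ∃ P : List (Σ x y : Fin n,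
        ((⊤ : SimpleGraph (Fin n)).deleteEdges {e | ∃ u ∈ A, e = s(v, u)}).Walk x y),
      IsPathDecomp ((⊤ : SimpleGraph (Fin n)).deleteEdges {e | ∃ u ∈ A, e = s(v, u)}) P ∧
      P.length ≤ (n + 1) / 2 := by
  classical
  have hadj : ∀ a b, ((⊤ : SimpleGraph (Fin n)).deleteEdges {e | ∃ u ∈ A, e = s(v, u)}).Adj a b ↔
      a ≠ b ∧ (a = v → b ∉ A) ∧ (b = v → a ∉ A) := by
    intro a b
    simp only [deleteEdges_adj, top_adj, Set.mem_ofPred_eq, Sym2.eq_iff, not_exists, not_and, not_or]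
    constructor
    · rintro ⟨h, h'⟩
      exact ⟨h, fun ha hb => (h' b hb).1 ha rfl, fun hb ha => (h' a ha).2 rfl hb⟩
    · rintro ⟨h, h1, h2⟩
      exact ⟨h, fun u hu => ⟨fun ha hb => h1 ha (hb ▸ hu), fun ha hb => h2 hb (ha ▸ hu)⟩⟩
  generalize hG : (⊤ : SimpleGraph (Fin n)).deleteEdges {e | ∃ u ∈ A, e = s(v, u)} = G at hadj ⊢
  constructor
  · obtain ⟨u, hu⟩ : ∃ u, u ∉ insert v A := by
      by_contra! hc
      have h1 : (insert v A) = Finset.univ := Finset.eq_univ_iff_forall.2 hc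
      have h2 := congrArg Finset.card h1
      rw [Finset.card_insert_of_notMem hvA, Finset.card_univ, Fintype.card_fin] at h2
      omega
    rw [Finset.mem_insert, not_or] at hu
    have hr : ∀ x, G.Reachable u x := by
      intro x
      by_cases hx : u = x
      · subst hx; exact Reachable.refl _
      · exact ((hadj u x).2 ⟨hx, fun h => absurd h hu.1, fun _ => hu.2⟩).reachable
    have : Nonempty (Fin n) := ⟨v⟩
    exact ⟨fun x y => (hr x).symm.trans (hr y)⟩
  · obtain ⟨v0, B, L, hv0, hvB, hB, hBc, h1, h2, h3, h4⟩ := good n (n-1-m) hn (by omega)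
    obtain ⟨φ, hφv, hφ⟩ := relabel n v0 B hv0 hvB hB v A hvA (by omega)
    let ψ : ℕ → Fin n := fun x => if h : x < n then φ ⟨x, h⟩ else v
    have hψ : ∀ x (h : x < n), ψ x = φ ⟨x, h⟩ := fun x h => by simp [ψ, h]
    have hψi : ∀ x y, x < n → y < n → ψ x = ψ y → x = y := by
      intro x y hx hy h
      rw [hψ x hx, hψ y hy] at h
      simpa using φ.injective h
    have hψs : ∀ a, ∃ x < n, ψ x = a := fun a =>
      ⟨(φ.symm a : Fin n), (φ.symm a).2, by rw [hψ _ (φ.symm a).2]; simp⟩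
    have hψv : ∀ x (h : x < n), ψ x = v ↔ x = v0 := by
      intro x hx
      rw [← hφv, ← hψ]
      exact ⟨fun h => hψi _ _ hx hv0 h, fun h => by rw [h]⟩
    have hψA : ∀ x (h : x < n), x ≠ v0 → (ψ x ∉ A ↔ x ∈ B) := by
      intro x hx h
      rw [hψ x hx, hφ ⟨x, hx⟩ (by simpa using h), not_not]
    have hadj' : ∀ x y, x < n → y < n → (G.Adj (ψ x) (ψ y) ↔
        x ≠ y ∧ (x = v0 → y ∈ B) ∧ (y = v0 → x ∈ B)) := by
      intro x y hx hy
      rw [hadj, hψv x hx, hψv y hy]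
      have := hψi x y hx hy
      have hA1 := hψA x hx
      have hA2 := hψA y hy
      constructor
      · rintro ⟨q1, q2, q3⟩
        have hne : x ≠ y := fun h => q1 (by rw [h])
        exact ⟨hne, fun h => (hA2 (fun h' => hne (h.trans h'.symm))).1 (q2 h),
          fun h => (hA1 (fun h' => hne (h'.trans h.symm))).1 (q3 h)⟩
      · rintro ⟨hne, q2, q3⟩
        exact ⟨fun h => hne (this h), fun h => (hA2 (fun h' => hne (h.trans h'.symm))).2 (q2 h),
          fun h => (hA1 (fun h' => hne (h'.trans h.symm))).2 (q3 h)⟩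
    have hw : ∀ i : Fin ((n+1)/2), ∃ p : (Σ x y : Fin n, G.Walk x y),
        p.2.2.support = (L i).map ψ ∧
        ∀ a b, s(a,b) ∈ p.2.2.edges ↔ C ((L i).map ψ) a b := by
      intro i
      have hne : (L i).map ψ ≠ [] := by simpa using (h1 i i.2).2
      obtain ⟨x, l, hl⟩ := List.exists_cons_of_ne_nil hne
      rw [hl]
      obtain ⟨y, p, hp1, hp2⟩ := exists_walk G l x (by
        intro a b hab
        rw [← hl, C_map] at hab
        obtain ⟨a', b', hab, rfl, rfl⟩ := hab
        have := (h4 a' b').1 ⟨i, i.2, hab⟩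
        exact (hadj' a' b' this.1 this.2.1).2 this.2.2)
      exact ⟨⟨x, y, p⟩, hp1, hp2⟩
    choose p hp1 hp2 using hw
    have hC : ∀ (i : Fin ((n+1)/2)) x y, x < n → y < n →
        (s(ψ x, ψ y) ∈ (p i).2.2.edges ↔ C (L i) x y) := by
      intro i x y hx hy
      rw [hp2, C_map]
      constructor
      · rintro ⟨a', b', hab, h5, h6⟩
        have := (h4 a' b').1 ⟨i, i.2, hab⟩
        rwa [hψi _ _ this.1 hx h5, hψi _ _ this.2.1 hy h6] at hab
      · intro h; exact ⟨x, y, h, rfl, rfl⟩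
    refine ⟨List.ofFn p, ⟨?_, ?_, ?_⟩, by simp⟩
    · intro q hq
      rw [List.mem_ofFn] at hq
      obtain ⟨i, rfl⟩ := hq
      rw [Walk.isPath_def, hp1]
      apply List.Nodup.map_on _ (h1 i i.2).1
      intro x hx y hy h
      exact hψi x y (h3 i i.2 x hx) (h3 i i.2 y hy) h
    · rw [List.pairwise_ofFn]
      intro i j hij e
      induction e using Sym2.ind with
      | _ a b =>
        obtain ⟨x, hx, rfl⟩ := hψs a
        obtain ⟨y, hy, rfl⟩ := hψs b
        rw [hC i x y hx hy, hC j x y hx hy]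
        intro q1 q2
        exact absurd (h2 i i.2 j j.2 x y q1 q2) (by intro h; exact hij.ne (Fin.ext h))
    · intro e
      induction e using Sym2.ind with
      | _ a b =>
        obtain ⟨x, hx, rfl⟩ := hψs a
        obtain ⟨y, hy, rfl⟩ := hψs b
        rw [mem_edgeSet, hadj' x y hx hy]
        constructor
        · intro h
          obtain ⟨i, hi, h⟩ := (h4 x y).2 ⟨hx, hy, h⟩
          exact ⟨p ⟨i, hi⟩, by rw [List.mem_ofFn]; exact ⟨_, rfl⟩, (hC ⟨i, hi⟩ x y hx hy).2 h⟩
        · rintro ⟨q, hq, h⟩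
          rw [List.mem_ofFn] at hq
          obtain ⟨i, rfl⟩ := hq
          exact ((h4 x y).1 ⟨i, i.2, (hC i x y hx hy).1 h⟩).2.2
end

section
/- Let n ≥ 4 and 3 ≤ m ≤ n−1. Let G be obtained from K_n by deleting the edges of a tadpole T_{m,1}: a cycle on m vertices together with one pendant edge attached to the cycle, all within K_n. Then G admits a path decomposition into at most ⌊(n+1)/2⌋ paths. -/
open SimpleGraph

namespace Tadp

/-- edges of the vertex sequence `y 0, …, y (n-1)` -/
def Ed {V : Type*} (y : ℕ → V) (n : ℕ) (e : Sym2 V) : Prop :=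
  ∃ i, i + 1 < n ∧ e = s(y i, y (i + 1))

def Tad {V : Type*} (t : ℕ → V) (m : ℕ) (e : Sym2 V) : Prop :=
  (∃ i, i < m ∧ e = s(t i, t (i + 1))) ∨ e = s(t 1, t m)

def Inj {V : Type*} (y : ℕ → V) (n : ℕ) : Prop :=
  ∀ i i', i < n → i' < n → y i = y i' → i = i'

def Good (V : Type*) (t : ℕ → V) (m N : ℕ) : Prop :=
  ∃ (y : ℕ → ℕ → V) (len : ℕ → ℕ),
    (∀ c, c < N → 1 ≤ len c) ∧ (∀ c, c < N → Inj (y c) (len c)) ∧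
    (∀ a a' : V, a ≠ a' → 
      ((∃ c, c < N ∧ Ed (y c) (len c) s(a, a')) ↔ ¬ Tad t m s(a, a')) ∧
      ∀ c c', c < N → c' < N → Ed (y c) (len c) s(a, a') → Ed (y c') (len c') s(a, a') → c = c')

lemma walk_of_seq {V : Type*} (G : SimpleGraph V) (n : ℕ) : ∀ (y : ℕ → V),
    Inj y (n + 1) → (∀ i, i < n → G.Adj (y i) (y (i + 1))) →
    ∃ p : G.Walk (y 0) (y n), p.IsPath ∧ (∀ e, e ∈ p.edges ↔ Ed y (n + 1) e) ∧
      ∀ v, v ∈ p.support → ∃ i, i < n + 1 ∧ v = y i := by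
  induction n with
  | zero =>
    intro y _ _
    refine ⟨SimpleGraph.Walk.nil, by simp, ?_, ?_⟩
    · intro e; simp [Ed]
    · intro v hv; exact ⟨0, by omega, by simpa using hv⟩
  | succ n ih =>
    intro y hy hG
    obtain ⟨p, hp, he, hs⟩ := ih (fun i => y (i + 1))
      (fun i i' h h' hh => by have := hy (i+1) (i'+1) (by omega) (by omega) hh; omega)
      (fun i hi => hG (i + 1) (by omega))
    refine ⟨SimpleGraph.Walk.cons (hG 0 (by omega)) p, ?_, ?_, ?_⟩
    · rw [SimpleGraph.Walk.cons_isPath_iff]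
      refine ⟨hp, fun h => ?_⟩
      obtain ⟨i, hi, h⟩ := hs _ h
      have := hy 0 (i+1) (by omega) (by omega) h
      omega
    · intro e
      rw [SimpleGraph.Walk.edges_cons, List.mem_cons, he]
      constructor
      · rintro (h | ⟨i, hi, h⟩)
        · exact ⟨0, by omega, h⟩
        · exact ⟨i + 1, by omega, h⟩
      · rintro ⟨i, hi, h⟩
        rcases i with _ | i
        · exact Or.inl h
        · exact Or.inr ⟨i, by omega, h⟩
    · intro v hv
      rw [SimpleGraph.Walk.support_cons, List.mem_cons] at hv
      rcases hv with h | h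
      · exact ⟨0, by omega, h⟩
      · obtain ⟨i, hi, h⟩ := hs _ h
        exact ⟨i + 1, by omega, h⟩

lemma exists_equiv {n M : ℕ} {V : Type*} [Fintype V] (hc : Fintype.card V = n)
    (t : ℕ → V) (ht : Inj t M) (t' : ℕ → Fin n) (ht' : Inj t' M) :
    ∃ φ : V ≃ Fin n, ∀ i, i < M → φ (t i) = t' i := by
  classical
  let e0 : V ≃ Fin n := Fintype.equivFinOfCardEq hc
  let g1 : Fin M → Fin n := fun i => e0 (t i)
  let g2 : Fin M → Fin n := fun i => t' i
  have h1 : Function.Injective g1 := fun i i' h => 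
    Fin.ext (ht i i' i.2 i'.2 (e0.injective h))
  have h2 : Function.Injective g2 := fun i i' h => Fin.ext (ht' i i' i.2 i'.2 h)
  let r : {x // x ∈ Set.range g1} ≃ {x // x ∈ Set.range g2} :=
    (Equiv.ofInjective g1 h1).symm.trans (Equiv.ofInjective g2 h2)
  refine ⟨e0.trans r.extendSubtype, fun i hi => ?_⟩
  have hm : e0 (t i) ∈ Set.range g1 := ⟨⟨i, hi⟩, rfl⟩
  show r.extendSubtype (e0 (t i)) = t' i
  rw [Equiv.extendSubtype_apply_of_mem _ _ hm]
  have : (⟨e0 (t i), hm⟩ : {x // x ∈ Set.range g1}) = Equiv.ofInjective g1 h1 ⟨i, hi⟩ := rfl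
  rw [this]
  simp [r, g2]

lemma good_map {n m N : ℕ} {V : Type*} (φ : V ≃ Fin n) (t : ℕ → V) (t' : ℕ → Fin n)
    (hm : 1 ≤ m) (h : ∀ i, i < m + 1 → φ (t i) = t' i) (hg : Good V t m N) :
    Good (Fin n) t' m N := by
  obtain ⟨y, len, h1, h2, h3⟩ := hg
  have hEd : ∀ (y : ℕ → V) l (a a' : Fin n), Ed (fun i => φ (y i)) l s(a, a') ↔ 
      Ed y l s(φ.symm a, φ.symm a') := by
    intro y l a a'
    unfold Ed
    refine exists_congr fun i => and_congr_right fun _ => ?_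
    simp [Sym2.eq_iff, Equiv.symm_apply_eq]
  refine ⟨fun c i => φ (y c i), len, h1, fun c hc i i' hi hi' hh => 
    h2 c hc i i' hi hi' (φ.injective hh), fun a a' ha => ?_⟩
  obtain ⟨h4, h5⟩ := h3 (φ.symm a) (φ.symm a') (fun hh => ha (φ.symm.injective hh))
  refine ⟨?_, ?_⟩
  · simp only [hEd]
    rw [h4, not_iff_not]
    unfold Tad
    refine or_congr (exists_congr fun i => and_congr_right fun hi => ?_) ?_
    · rw [← h i (by omega), ← h (i + 1) (by omega)]
      simp [Sym2.eq_iff, Equiv.symm_apply_eq]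
    · rw [← h 1 (by omega), ← h m (by omega)]
      simp [Sym2.eq_iff, Equiv.symm_apply_eq]
  · intro c c' hc hc'
    rw [hEd, hEd]
    exact h5 c c' hc hc'

lemma final (n m : ℕ) (hm : 3 ≤ m)
    (f : ZMod m → Fin n) (hf : Function.Injective f)
    (w : Fin n) (hw : w ∉ Set.range f) {V : Type*} [Fintype V] (hc : Fintype.card V = n)
    (t : ℕ → V) (ht : Inj t (m + 1)) (hg : Good V t m ((n + 1) / 2)) :
    ∃ P : List (Σ x y : Fin n,
        ((⊤ : SimpleGraph (Fin n)).deleteEdges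
          {e | (∃ i, e = s(f i, f (i + 1))) ∨ e = s(f 0, w)}).Walk x y),
      IsPathDecomp ((⊤ : SimpleGraph (Fin n)).deleteEdges
          {e | (∃ i, e = s(f i, f (i + 1))) ∨ e = s(f 0, w)}) P ∧
      P.length ≤ (n + 1) / 2 := by
  haveI : NeZero m := ⟨by omega⟩
  let t' : ℕ → Fin n := fun i => if i = 0 then w else f ((i - 1 : ℕ) : ZMod m)
  have ht' : Inj t' (m + 1) := by
    intro i i' hi hi' h
    by_cases h0 : i = 0 <;> by_cases h0' : i' = 0
    · omega
    · simp only [t', h0, h0', if_true, if_false] at h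
      exact absurd ⟨_, h.symm⟩ hw
    · simp only [t', h0, h0', if_true, if_false] at h
      exact absurd ⟨_, h⟩ hw
    · simp only [t', h0, h0', if_false] at h
      have := hf h
      have := congrArg ZMod.val this
      rw [ZMod.val_cast_of_lt (by omega), ZMod.val_cast_of_lt (by omega)] at this
      omega
  obtain ⟨φ, hφ⟩ := exists_equiv hc t ht t' ht'
  obtain ⟨y, len, h1, h2, h3⟩ := good_map φ t t' (by omega) hφ hg
  set S : Set (Sym2 (Fin n)) := {e | (∃ i, e = s(f i, f (i + 1))) ∨ e = s(f 0, w)} with hS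
  have hTad : ∀ e, e ∈ S ↔ Tad t' m e := by
    intro e
    have t0 : t' 0 = w := rfl
    have ts : ∀ i, t' (i + 1) = f (i : ZMod m) := by intro i; simp [t']
    have tm : t' m = f ((m - 1 : ℕ) : ZMod m) := by
      simp only [t']; rw [if_neg (by omega)]
    have t1 : t' 1 = f 0 := by simpa using ts 0
    constructor
    · rintro (⟨i, rfl⟩ | rfl)
      · have hi := ZMod.val_lt i
        have hii : ((i.val : ℕ) : ZMod m) = i := ZMod.natCast_zmod_val i
        by_cases hl : i.val + 1 < m
        · left
          refine ⟨i.val + 1, hl, ?_⟩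
          rw [ts, ts, hii]; push_cast; rw [hii]
        · right
          have hv : i.val = m - 1 := by omega
          have : i + 1 = 0 := by
            have : ((i.val + 1 : ℕ) : ZMod m) = 0 := by
              rw [show i.val + 1 = m by omega]; simp
            push_cast at this; rwa [hii] at this
          rw [this, t1, tm, ← hv, hii, Sym2.eq_swap]
      · left
        refine ⟨0, by omega, ?_⟩
        rw [t0, t1, Sym2.eq_swap]
    · rintro (⟨i, hi, rfl⟩ | rfl)
      · rcases i with _ | i
        · right; rw [t0, t1, Sym2.eq_swap]
        · left; refine ⟨i, ?_⟩
          rw [ts, ts]; push_cast; rfl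
      · left
        refine ⟨((m - 1 : ℕ) : ZMod m), ?_⟩
        rw [t1, tm, Sym2.eq_swap]
        congr 3
        have : ((m - 1 + 1 : ℕ) : ZMod m) = 0 := by
          rw [show m - 1 + 1 = m by omega]; simp
        push_cast at this; exact this.symm
  set G := (⊤ : SimpleGraph (Fin n)).deleteEdges S with hG
  have hadj : ∀ a a', G.Adj a a' ↔ a ≠ a' ∧ ¬ Tad t' m s(a, a') := by
    intro a a'
    rw [hG, SimpleGraph.deleteEdges_adj, hTad]; simp
  have key : ∀ c : Fin ((n + 1) / 2), ∃ p : (Σ u v : Fin n, G.Walk u v), p.2.2.IsPath ∧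
      ∀ e, e ∈ p.2.2.edges ↔ Ed (y c) (len c) e := by
    intro c
    have hl := h1 c c.2
    have hadj' : ∀ i, i < len c - 1 → G.Adj (y c i) (y c (i + 1)) := by
      intro i hi
      rw [hadj]
      have hne : y c i ≠ y c (i + 1) := fun h => by
        have := h2 c c.2 i (i+1) (by omega) (by omega) h
        omega
      exact ⟨hne, (h3 _ _ hne).1.1 ⟨c, c.2, i, by omega, rfl⟩⟩
    obtain ⟨p, hp, he, -⟩ := walk_of_seq G (len c - 1) (y c) 
      (by rw [show len c - 1 + 1 = len c by omega]; exact h2 c c.2) hadj'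
    refine ⟨⟨_, _, p⟩, hp, ?_⟩
    rw [show len c - 1 + 1 = len c by omega] at he
    exact he
  choose p hp he using key
  refine ⟨List.ofFn p, ⟨?_, ?_, ?_⟩, by simp⟩
  · intro q hq
    obtain ⟨c, rfl⟩ := (List.mem_ofFn' _ _).1 hq
    exact hp c
  · rw [List.pairwise_ofFn]
    intro c c' hcc e hc hc'
    have hed := (p c).2.2.edges_subset_edgeSet hc
    rw [he] at hc hc'
    induction e using Sym2.ind with
    | _ a a' =>
      have hne : a ≠ a' := ((hadj _ _).1 hed).1
      have := (h3 a a' hne).2 c c' c.2 c'.2 hc hc'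
      have := Fin.ext this
      exact absurd hcc (by rw [this]; exact lt_irrefl _)
  · intro e
    constructor
    · intro hed
      induction e using Sym2.ind with
      | _ a a' =>
        obtain ⟨hne, hnt⟩ := (hadj a a').1 hed
        obtain ⟨c, hc, h⟩ := (h3 a a' hne).1.2 hnt
        exact ⟨p ⟨c, hc⟩, (List.mem_ofFn' _ _).2 ⟨_, rfl⟩, (he _ _).2 h⟩
    · rintro ⟨q, _, h⟩
      exact q.2.2.edges_subset_edgeSet h

def zi (i : ℕ) : ℤ := if i % 2 = 0 then -((i / 2 : ℕ) : ℤ) else (((i + 1) / 2 : ℕ) : ℤ)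

lemma zi_add_even (i : ℕ) (h : i % 2 = 0) : zi i + zi (i + 1) = 1 := by
  unfold zi; rw [if_pos h, if_neg (by omega)]; omega

lemma zi_add_odd (i : ℕ) (h : i % 2 = 1) : zi i + zi (i + 1) = 0 := by
  unfold zi; rw [if_neg (by omega), if_pos (by omega)]; omega

lemma zi_inj (k : ℕ) : Inj (fun i => ((zi i : ℤ) : ZMod (2 * k))) (2 * k) := by
  intro i i' hi hi' h
  simp only at h
  rw [ZMod.intCast_eq_intCast_iff_dvd_sub] at h
  obtain ⟨d, hd⟩ := h
  have h1 : ∀ i, i < 2 * k → -(k : ℤ) < zi i ∧ zi i ≤ k := by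
    intro i hi; unfold zi; split_ifs <;> omega
  have a1 := h1 i hi
  have a2 := h1 i' hi'
  push_cast at hd
  have : d = 0 := by
    rcases lt_trichotomy d 0 with h | h | h
    · nlinarith
    · exact h
    · nlinarith
  subst this
  unfold zi at hd
  split_ifs at hd <;> omega

lemma zi_surj (k : ℕ) (hk : 0 < k) (a : ZMod (2 * k)) : 
    ∃ i, i < 2 * k ∧ ((zi i : ℤ) : ZMod (2 * k)) = a := by
  have : NeZero (2 * k) := ⟨by omega⟩
  have hb : Function.Bijective (fun i : Fin (2 * k) => ((zi i : ℤ) : ZMod (2 * k))) := by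
    rw [Fintype.bijective_iff_injective_and_card]
    refine ⟨fun i i' h => Fin.ext (zi_inj k i i' i.2 i'.2 h), by simp⟩
  obtain ⟨i, hi⟩ := hb.2 a
  exact ⟨i, i.2, hi⟩

def hx (k : ℕ) (al b : ℕ → ℕ) (c i : ℕ) : ZMod (2 * k) :=
  (al c : ZMod (2 * k)) + ((b c : ZMod (2 * k)) - 2 * (al c : ZMod (2 * k))) * ((zi i : ℤ) : ZMod (2 * k))

def Dat (k : ℕ) (al b : ℕ → ℕ) : Prop :=
  2 ≤ k ∧ (al 0 = 0 ∧ b 0 = 1) ∧ (∀ i, i < k → IsUnit ((b i : ZMod (2 * k)) - 2 * (al i : ZMod (2 * k)))) ∧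
  ∀ σ : ZMod (2 * k), ∃ c, c < k ∧ ∀ i, i < k → 
    ((σ = 2 * (al i : ZMod (2 * k)) ∨ σ = (b i : ZMod (2 * k))) ↔ i = c)

lemma hx_inj {k : ℕ} {al b : ℕ → ℕ} (h : Dat k al b) (c : ℕ) (hc : c < k) : Inj (hx k al b c) (2 * k) := by
  intro i i' hi hi' hh
  unfold hx at hh
  have := (h.2.2.1 c hc).mul_left_cancel (add_left_cancel hh)
  exact zi_inj k i i' hi hi' this

lemma hx_surj {k : ℕ} {al b : ℕ → ℕ} (h : Dat k al b) (c : ℕ) (hc : c < k) (a : ZMod (2 * k)) :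
    ∃ i, i < 2 * k ∧ hx k al b c i = a := by
  obtain ⟨u, hu⟩ := h.2.2.1 c hc
  obtain ⟨i, hi, hia⟩ := zi_surj k (by have := h.1; omega) ((u⁻¹ : (ZMod (2 * k))ˣ) * (a - al c))
  refine ⟨i, hi, ?_⟩
  unfold hx
  rw [hia, ← hu]; simp

lemma hx_zero {k : ℕ} {al b : ℕ → ℕ} (h : Dat k al b) (i : ℕ) : hx k al b 0 i = ((zi i : ℤ) : ZMod (2 * k)) := by
  unfold hx; rw [h.2.1.1, h.2.1.2]; simp

lemma hx_even (k : ℕ) (al b : ℕ → ℕ) (c i : ℕ) (hi : i % 2 = 0) : 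
    hx k al b c i + hx k al b c (i + 1) = b c := by
  have : ((zi i : ℤ) : ZMod (2 * k)) + ((zi (i + 1) : ℤ) : ZMod (2 * k)) = 1 := by
    rw [← Int.cast_add, zi_add_even i hi]; simp
  unfold hx
  linear_combination ((b c : ZMod (2 * k)) - 2 * (al c : ZMod (2 * k))) * this

lemma hx_odd (k : ℕ) (al b : ℕ → ℕ) (c i : ℕ) (hi : i % 2 = 1) : 
    hx k al b c i + hx k al b c (i + 1) = 2 * al c := by
  have : ((zi i : ℤ) : ZMod (2 * k)) + ((zi (i + 1) : ℤ) : ZMod (2 * k)) = 0 := by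
    rw [← Int.cast_add, zi_add_odd i hi]; simp
  unfold hx
  linear_combination ((b c : ZMod (2 * k)) - 2 * (al c : ZMod (2 * k))) * this

lemma seq_uniq {V : Type*} {y : ℕ → V} {n : ℕ} (h : Inj y n) {i i' : ℕ} (hi : i + 1 < n) (hi' : i' + 1 < n)
    (he : s(y i, y (i + 1)) = s(y i', y (i' + 1))) : i = i' := by
  rw [Sym2.eq_iff] at he
  rcases he with ⟨h1, _⟩ | ⟨h1, h2⟩
  · exact h _ _ (by omega) (by omega) h1
  · have := h _ _ (by omega) (by omega) h1
    have := h _ _ (by omega) (by omega) h2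
    omega

lemma hx_cover {k : ℕ} {al b : ℕ → ℕ} (h : Dat k al b) (c : ℕ) (hc : c < k) (a a' : ZMod (2 * k)) (hne : a ≠ a')
    (hs : a + a' = 2 * (al c : ZMod (2 * k)) ∨ a + a' = (b c : ZMod (2 * k))) :
    ∃ i, i + 1 < 2 * k ∧ s(a, a') = s(hx k al b c i, hx k al b c (i + 1)) := by
  obtain ⟨i, hi, rfl⟩ := hx_surj h c hc a
  have hinj := hx_inj h c hc
  rcases Nat.mod_two_eq_zero_or_one i with hp | hp <;> rcases hs with hs | hs
  · rcases i with _ | i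
    · exfalso; apply hne
      have : hx k al b c 0 = al c := by simp [hx, zi]
      rw [this] at hs ⊢
      linear_combination - hs
    · refine ⟨i, by omega, ?_⟩
      have := hx_odd k al b c i (by omega)
      rw [Sym2.eq_swap, show a' = hx k al b c i by linear_combination hs - this]
  · refine ⟨i, by omega, ?_⟩
    have := hx_even k al b c i (by omega)
    rw [show a' = hx k al b c (i + 1) by linear_combination hs - this]
  · by_cases hl : i + 1 < 2 * k
    · refine ⟨i, by omega, ?_⟩
      have := hx_odd k al b c i (by omega)
      rw [show a' = hx k al b c (i + 1) by linear_combination hs - this]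
    · exfalso; apply hne
      have hik : i = 2 * k - 1 := by omega
      have hz : zi i = k := by unfold zi; rw [if_neg (by omega)]; omega
      have h2 : (2 : ZMod (2 * k)) * (k : ZMod (2 * k)) = 0 := by
        have := ZMod.natCast_self (2 * k)
        push_cast at this; exact this
      have hxi : hx k al b c i = al c + ((b c : ZMod (2 * k)) - 2 * al c) * k := by
        unfold hx; rw [hz]; simp
      rw [hxi] at hs ⊢
      linear_combination - hs + ((b c : ZMod (2 * k)) - 2 * al c) * h2
  · rcases i with _ | i
    · omega
    · refine ⟨i, by omega, ?_⟩
      have := hx_even k al b c i (by omega)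
      rw [Sym2.eq_swap, show a' = hx k al b c i by linear_combination hs - this]

lemma hx_color {k : ℕ} {al b : ℕ → ℕ} (h : Dat k al b) (a a' : ZMod (2 * k)) (hne : a ≠ a') :
    ∃ c0 i0, c0 < k ∧ i0 + 1 < 2 * k ∧ s(a, a') = s(hx k al b c0 i0, hx k al b c0 (i0 + 1)) ∧
      ∀ c i, c < k → i + 1 < 2 * k → s(a, a') = s(hx k al b c i, hx k al b c (i + 1)) → c = c0 ∧ i = i0 := by
  obtain ⟨c0, hc0, hcol⟩ := h.2.2.2 (a + a')
  obtain ⟨i0, hi0, he⟩ := hx_cover h c0 hc0 a a' hne ((hcol c0 hc0).2 rfl)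
  refine ⟨c0, i0, hc0, hi0, he, fun c i hc hi hei => ?_⟩
  have hsum : a + a' = hx k al b c i + hx k al b c (i + 1) := by
    rw [Sym2.eq_iff] at hei
    rcases hei with ⟨h1, h2⟩ | ⟨h1, h2⟩ <;> rw [h1, h2]
    rw [add_comm]
  have hcc : c = c0 := by
    rw [← hcol c hc, hsum]
    rcases Nat.mod_two_eq_zero_or_one i with hp | hp
    · right; exact hx_even k al b c i hp
    · left; exact hx_odd k al b c i hp
  subst hcc
  exact ⟨rfl, seq_uniq (hx_inj h c hc) hi hi0 (hei.symm.trans he)⟩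

lemma even_core {k m j r : ℕ} {al b : ℕ → ℕ} (h : Dat k al b) (hm : 3 ≤ m) (hm2 : m + 1 ≤ 2 * k)
    (hj : 0 < j) (hjk : j < k) (hr : r + 1 < 2 * k)
    (h1 : hx k al b j r = hx k al b 0 m) (h2 : hx k al b j (r + 1) = hx k al b 0 1)
    (h3 : ∀ i, i < r → ∃ l, l < m ∧ hx k al b j i = hx k al b 0 l) :
    Good (ZMod (2 * k)) (hx k al b 0) m k := by
  let W : ℕ → ZMod (2 * k) := fun i => if i < r then hx k al b j i else hx k al b 0 (m + i - r)
  let y : ℕ → ℕ → ZMod (2 * k) := fun c => if c = 0 then W else 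
    if c = j then fun i => hx k al b j (r + 1 + i) else hx k al b c
  let len : ℕ → ℕ := fun c => if c = 0 then r + 2 * k - m else 
    if c = j then 2 * k - r - 1 else 2 * k
  have hk := h.1
  have i0 := hx_inj h 0 (by omega)
  have ij := hx_inj h j hjk
  refine ⟨y, len, ?_, ?_, ?_⟩
  · intro c hc
    simp only [len]; split_ifs <;> omega
  · intro c hc
    by_cases hc0 : c = 0
    · simp only [y, len, hc0, if_true]
      intro i i' hi hi' hh
      simp only [W] at hh
      split_ifs at hh with g g' g'
      · exact ij i i' (by omega) (by omega) hh
      · obtain ⟨l, hl, hl2⟩ := h3 i g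
        have := i0 _ _ (by omega) (by omega) (hl2.symm.trans hh)
        omega
      · obtain ⟨l, hl, hl2⟩ := h3 i' g'
        have := i0 _ _ (by omega) (by omega) (hh.trans hl2)
        omega
      · have := i0 _ _ (by omega) (by omega) hh
        omega
    · by_cases hcj : c = j
      · simp only [y, len, hc0, hcj, if_true, if_neg (show j ≠ 0 by omega)]
        intro i i' hi hi' hh
        have := ij _ _ (by omega) (by omega) hh
        omega
      · simp only [y, len, hc0, hcj, if_false]
        exact hx_inj h c hc
  · intro a a' hne
    obtain ⟨c0, i0, hc0, hi0, he, huq⟩ := hx_color h a a' hne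
    have hT : Tad (hx k al b 0) m s(a, a') ↔ (c0 = 0 ∧ i0 < m) ∨ (c0 = j ∧ i0 = r) := by
      constructor
      · rintro (⟨i, hi, hh⟩ | hh)
        · have := huq 0 i (by omega) (by omega) hh
          omega
        · rw [← h1, ← h2] at hh
          have hh := hh.trans Sym2.eq_swap
          have := huq j r hjk hr hh
          omega
      · rintro (⟨rfl, hh⟩ | ⟨rfl, rfl⟩)
        · exact Or.inl ⟨i0, hh, he⟩
        · right; rw [← h1, ← h2, he, Sym2.eq_swap]
    have hW : Ed W (r + 2 * k - m) s(a, a') ↔ (c0 = 0 ∧ m ≤ i0) ∨ (c0 = j ∧ i0 < r) := by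
      have w1 : ∀ i, i < r → W i = hx k al b j i ∧ W (i + 1) = hx k al b j (i + 1) := by
        intro i hi
        simp only [W]
        rw [if_pos hi]
        refine ⟨rfl, ?_⟩
        split_ifs with g
        · rfl
        · have : i + 1 = r := by omega
          rw [this, h1]; congr 1; omega
      have w2 : ∀ i, r ≤ i → W i = hx k al b 0 (m + i - r) ∧ W (i + 1) = hx k al b 0 (m + i - r + 1) := by
        intro i hi
        simp only [W]
        rw [if_neg (by omega), if_neg (by omega)]
        exact ⟨rfl, by congr 1; omega⟩
      constructor
      · rintro ⟨i, hi, hh⟩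
        by_cases g : i < r
        · rw [(w1 i g).1, (w1 i g).2] at hh
          have := huq j i hjk (by omega) hh
          omega
        · rw [(w2 i (by omega)).1, (w2 i (by omega)).2] at hh
          have := huq 0 _ (by omega) (by omega) hh
          omega
      · rintro (⟨rfl, hh⟩ | ⟨rfl, hh⟩)
        · refine ⟨i0 + r - m, by omega, ?_⟩
          rw [(w2 _ (by omega)).1, (w2 _ (by omega)).2, show m + (i0 + r - m) - r = i0 by omega]
          exact he
        · refine ⟨i0, by omega, ?_⟩
          rw [(w1 _ hh).1, (w1 _ hh).2]
          exact he
    have hP : ∀ c, c < k → (Ed (y c) (len c) s(a, a') ↔ 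
        (c = 0 ∧ ((c0 = 0 ∧ m ≤ i0) ∨ (c0 = j ∧ i0 < r))) ∨ (c = j ∧ c0 = j ∧ r < i0) ∨ 
        (c ≠ 0 ∧ c ≠ j ∧ c = c0)) := by
      intro c hc
      by_cases hc0 : c = 0
      · subst hc0
        simp only [y, len, if_true]
        rw [hW]; grind
      · by_cases hcj : c = j
        · simp only [y, len, hcj, if_true, if_neg (show j ≠ 0 by omega)]
          constructor
          · rintro ⟨i, hi, hh⟩
            have := huq j (r + 1 + i) hjk (by omega) hh
            grind
          · intro hh
            have e1 : c0 = j := by omega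
            have e2 : r < i0 := by omega
            subst e1
            refine ⟨i0 - r - 1, by omega, ?_⟩
            simp only
            rw [show r + 1 + (i0 - r - 1) = i0 by omega, 
              show r + 1 + (i0 - r - 1 + 1) = i0 + 1 by omega]
            exact he
        · simp only [y, len, hc0, hcj, if_false]
          constructor
          · rintro ⟨i, hi, hh⟩
            have := huq c i hc (by omega) hh
            omega
          · intro hh
            have e1 : c = c0 := by grind
            subst e1
            exact ⟨i0, hi0, he⟩
    refine ⟨?_, ?_⟩
    · rw [hT]
      constructor
      · rintro ⟨c, hc, hh⟩
        rw [hP c hc] at hh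
        omega
      · intro hh
        by_cases g : c0 = j ∧ i0 < r
        · exact ⟨0, by omega, (hP 0 (by omega)).2 (by grind)⟩
        · exact ⟨c0, by omega, (hP c0 (by omega)).2 (by grind)⟩
    · intro c c' hc hc' g g'
      rw [hP c hc] at g
      rw [hP c' hc'] at g'
      omega

lemma zi_pos (v : ℤ) (h : 1 ≤ v) : zi (2 * v - 1).toNat = v := by
  unfold zi; rw [if_neg (by omega)]; omega

lemma zi_neg (v : ℤ) (h : v ≤ 0) : zi (-2 * v).toNat = v := by
  unfold zi; rw [if_pos (by omega)]; omega

lemma hx_int (k : ℕ) (al b : ℕ → ℕ) (c i : ℕ) (A d : ℤ) (h1 : (al c : ZMod (2 * k)) = (A : ℤ))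
    (h2 : (b c : ZMod (2 * k)) = 2 * ((A : ℤ) : ZMod (2 * k)) + (d : ℤ)) : 
    hx k al b c i = ((A + d * zi i : ℤ) : ZMod (2 * k)) := by
  unfold hx; rw [h1, h2]; push_cast; ring

lemma two_k (k : ℕ) : (2 : ZMod (2 * k)) * (k : ZMod (2 * k)) = 0 := by
  have := ZMod.natCast_self (2 * k)
  push_cast at this; exact this

lemma dat_of (k ε : ℕ) (b : ℕ → ℕ) (hk : 2 ≤ k) (hb0 : b 0 = 1) (hb : ∀ i, i < k → b i < 2 * k)
    (hu : ∀ i, i < k → IsUnit ((b i : ZMod (2 * k)) - 2 * (i : ZMod (2 * k))))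
    (hc : ∀ v, v < 2 * k → ∃ c, c < k ∧ ∀ i, i < k → ((v = 2 * i ∨ v = b i) ↔ i = c)) :
    Dat k (fun c => if c = 0 then 0 else c + ε * k) b := by
  have : NeZero (2 * k) := ⟨by omega⟩
  have hal : ∀ i : ℕ, (2 : ZMod (2 * k)) * (((if i = 0 then 0 else i + ε * k : ℕ)) : ZMod (2 * k)) = 
      2 * (i : ZMod (2 * k)) := by
    intro i
    split_ifs with h
    · simp [h]
    · push_cast; linear_combination (ε : ZMod (2 * k)) * two_k k
  refine ⟨hk, ⟨rfl, hb0⟩, ?_, ?_⟩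
  · intro i hi
    simp only [hal]
    exact hu i hi
  · intro σ
    obtain ⟨c, hck, h⟩ := hc σ.val (ZMod.val_lt σ)
    refine ⟨c, hck, fun i hi => ?_⟩
    rw [← h i hi]
    have hv : ∀ a, a < 2 * k → (σ = (a : ZMod (2 * k)) ↔ σ.val = a) := by
      intro a ha
      constructor
      · rintro rfl; exact ZMod.val_cast_of_lt ha
      · intro h; rw [← h]; simp
    simp only [hal]
    rw [← hv (b i) (hb i hi), ← hv (2 * i) (by omega)]
    push_cast; rfl

lemma dat_default (k ε : ℕ) (hk : 2 ≤ k) : 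
    Dat k (fun c => if c = 0 then 0 else c + ε * k) (fun c => 2 * c + 1) := by
  refine dat_of k ε _ hk rfl (fun i hi => by omega) ?_ ?_
  · intro i hi; push_cast; ring_nf; exact isUnit_one
  · intro v hv; exact ⟨v / 2, by omega, fun i hi => by omega⟩

lemma dat_flip (k ε R : ℕ) (hk : 4 ≤ k) (hR : R % 2 = 1) (hR1 : 3 ≤ R) (hR2 : R + 3 ≤ 2 * k) :
    ∃ b : ℕ → ℕ, Dat k (fun c => if c = 0 then 0 else c + ε * k) b ∧ b ((R + 1) / 2) = R := by
  obtain ⟨D, hD3, hDo, hDk, hD4⟩ : ∃ D, 3 ≤ D ∧ D % 2 = 1 ∧ D + 3 ≤ 2 * k ∧ 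
      (2 * k = 2 * D + 2 ∨ 2 * k = 2 * D + 4) := by
    rcases Nat.mod_two_eq_zero_or_one k with h | h
    · exact ⟨k - 1, by omega, by omega, by omega, by omega⟩
    · exact ⟨k - 2, by omega, by omega, by omega, by omega⟩
  have hcop : Nat.Coprime D (2 * k) := by
    have g1 : Nat.gcd D (2 * k) ∣ D := Nat.gcd_dvd_left _ _
    have g2 : Nat.gcd D (2 * k) ∣ 2 * k := Nat.gcd_dvd_right _ _
    have g3 : Nat.gcd D (2 * k) ∣ 4 := by
      rcases hD4 with h | h
      · have : Nat.gcd D (2 * k) ∣ 2 := (Nat.dvd_add_right (g1.mul_left 2)).1 (h ▸ g2)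
        exact this.trans (by norm_num)
      · exact (Nat.dvd_add_right (g1.mul_left 2)).1 (h ▸ g2)
    unfold Nat.Coprime
    generalize Nat.gcd D (2 * k) = g at g1 g3
    have := Nat.le_of_dvd (by norm_num) g3
    interval_cases g <;> omega
  obtain ⟨a, ha1, ha2, ha3, ha4⟩ : ∃ a, 1 ≤ a ∧ 2 * a + 1 ≤ R ∧ R + 2 ≤ 2 * a + D ∧ 2 * a + D < 2 * k := by
    by_cases h : D ≤ R
    · exact ⟨(R + 2 - D) / 2, by omega, by omega, by omega, by omega⟩
    · exact ⟨1, by omega, by omega, by omega, by omega⟩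
  refine ⟨fun i => if i = a then 2 * a + D else if a < i ∧ 2 * i < 2 * a + D then 2 * i - 1 else 2 * i + 1,
    dat_of k ε _ (by omega) ?_ ?_ ?_ ?_, ?_⟩
  · rw [if_neg (by omega), if_neg (by omega)]
  · intro i hi
    split_ifs <;> omega
  · intro i hi
    split_ifs with h1 h2
    · subst h1
      have := (ZMod.unitOfCoprime D hcop).isUnit
      rw [ZMod.coe_unitOfCoprime] at this
      push_cast; ring_nf; exact this
    · have : 2 * i - 1 + 1 = 2 * i := by omega
      have := congrArg (Nat.cast : ℕ → ZMod (2 * k)) this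
      push_cast at this
      have h3 : ((2 * i - 1 : ℕ) : ZMod (2 * k)) - 2 * (i : ZMod (2 * k)) = -1 := by
        linear_combination this
      rw [h3]; exact isUnit_one.neg
    · push_cast; ring_nf; exact isUnit_one
  · intro v hv
    rcases Nat.mod_two_eq_zero_or_one v with hp | hp
    · refine ⟨v / 2, by omega, fun i hi => ?_⟩
      split_ifs <;> omega
    · by_cases g1 : v = 2 * a + D
      · refine ⟨a, by omega, fun i hi => ?_⟩
        split_ifs <;> omega
      · by_cases g2 : 2 * a < v ∧ v < 2 * a + D
        · refine ⟨(v + 1) / 2, by omega, fun i hi => ?_⟩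
          split_ifs <;> omega
        · refine ⟨v / 2, by omega, fun i hi => ?_⟩
          split_ifs <;> omega
  · simp only
    rw [if_neg (by omega), if_pos (by omega)]; omega

/-- the odd cycle case, even `n` -/
lemma even_modd {k q : ℕ} {b : ℕ → ℕ} {j : ℕ} {d : ℤ} 
    (h : Dat k (fun c => if c = 0 then 0 else c + 0 * k) b) (hq : 2 ≤ q) (hqk : q ≤ k)
    (hjk : j < k) (hd : (d = 1 ∧ q + 1 = 2 * j ∧ b j = 2 * j + 1) ∨ (d = -1 ∧ q + 2 = 2 * j ∧ b j + 1 = 2 * j)) :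
    ∃ t : ℕ → ZMod (2 * k), Inj t (2 * k) ∧ Good (ZMod (2 * k)) t (2 * q - 1) k := by
  have hk := h.1
  refine ⟨_, hx_inj h 0 (by omega), ?_⟩
  have hbj : (b j : ℤ) = 2 * (j : ℤ) + d := by omega
  have X : ∀ i, hx k (fun c => if c = 0 then 0 else c + 0 * k) b j i = ((j + d * zi i : ℤ) : ZMod (2 * k)) := by
    intro i
    refine hx_int _ _ _ _ _ (j : ℤ) d ?_ ?_
    · rw [if_neg (by omega)]; simp
    · exact_mod_cast congrArg (Int.cast : ℤ → ZMod (2 * k)) hbj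
  refine even_core (j := j) (r := q - 2) h (by omega) (by omega) (by omega) hjk (by omega) ?_ ?_ ?_
  · rw [X, hx_zero h]; congr 1
    unfold zi
    rcases hd with ⟨rfl, h1, h2⟩ | ⟨rfl, h1, h2⟩ <;> split_ifs <;> omega
  · rw [X, hx_zero h, show zi 1 = 1 from rfl]; congr 1
    unfold zi
    rcases hd with ⟨rfl, h1, h2⟩ | ⟨rfl, h1, h2⟩ <;> split_ifs <;> omega
  · intro i hi
    have hv : 2 ≤ j + d * zi i ∧ j + d * zi i < q := by
      unfold zi
      rcases hd with ⟨rfl, h1, h2⟩ | ⟨rfl, h1, h2⟩ <;> split_ifs <;> omega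
    refine ⟨(2 * (j + d * zi i) - 1).toNat, by omega, ?_⟩
    rw [X, hx_zero h, zi_pos _ (by omega)]

lemma even_meven {k q : ℕ} {b : ℕ → ℕ} {j : ℕ} {d : ℤ} 
    (h : Dat k (fun c => if c = 0 then 0 else c + 1 * k) b) (hq : 2 ≤ q) (hqk : q < k)
    (hjk : j < k) (hd : (d = 1 ∧ 2 * j + q = 2 * k ∧ b j = 2 * j + 1) ∨ 
      (d = -1 ∧ 2 * j + q = 2 * k + 1 ∧ b j + 1 = 2 * j)) :
    ∃ t : ℕ → ZMod (2 * k), Inj t (2 * k) ∧ Good (ZMod (2 * k)) t (2 * q) k := by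
  have hk := h.1
  refine ⟨_, hx_inj h 0 (by omega), ?_⟩
  have hbj : (b j : ℤ) = 2 * (j : ℤ) + d := by omega
  have h2k := two_k k
  have X : ∀ i, hx k (fun c => if c = 0 then 0 else c + 1 * k) b j i = 
      (((j - k : ℤ) + d * zi i : ℤ) : ZMod (2 * k)) := by
    intro i
    refine hx_int _ _ _ _ _ (j - k : ℤ) d ?_ ?_
    · rw [if_neg (by omega)]; push_cast; linear_combination h2k
    · have := congrArg (Int.cast : ℤ → ZMod (2 * k)) hbj
      push_cast at this ⊢
      rw [this]; linear_combination h2k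
  refine even_core (j := j) (r := q) h (by omega) (by omega) (by omega) hjk (by omega) ?_ ?_ ?_
  · rw [X, hx_zero h]; congr 1
    unfold zi
    rcases hd with ⟨rfl, h1, h2⟩ | ⟨rfl, h1, h2⟩ <;> split_ifs <;> omega
  · rw [X, hx_zero h, show zi 1 = 1 from rfl]; congr 1
    unfold zi
    rcases hd with ⟨rfl, h1, h2⟩ | ⟨rfl, h1, h2⟩ <;> split_ifs <;> omega
  · intro i hi
    have hv : -(q : ℤ) < (j - k : ℤ) + d * zi i ∧ (j - k : ℤ) + d * zi i ≤ 0 := by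
      unfold zi
      rcases hd with ⟨rfl, h1, h2⟩ | ⟨rfl, h1, h2⟩ <;> split_ifs <;> omega
    refine ⟨(-2 * ((j - k : ℤ) + d * zi i)).toNat, by omega, ?_⟩
    rw [X, hx_zero h, zi_neg _ (by omega)]

lemma even_all {k m : ℕ} (hk : 2 ≤ k) (hm : 3 ≤ m) (hm2 : m + 1 ≤ 2 * k) (hs : 4 ≤ k ∨ m ≠ 3) :
    ∃ t : ℕ → ZMod (2 * k), Inj t (2 * k) ∧ Good (ZMod (2 * k)) t m k := by
  rcases Nat.mod_two_eq_zero_or_one m with hp | hp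
  · obtain ⟨q, rfl⟩ : ∃ q, m = 2 * q := ⟨m / 2, by omega⟩
    rcases Nat.mod_two_eq_zero_or_one q with hq | hq
    · exact even_meven (j := k - q / 2) (d := 1) (dat_default k 1 hk) (by omega) (by omega) (by omega) 
        (Or.inl ⟨rfl, by omega, rfl⟩)
    · obtain ⟨b, hb, hb2⟩ := dat_flip k 1 (2 * k - q) (by omega) (by omega) (by omega) (by omega)
      exact even_meven (j := (2 * k - q + 1) / 2) (d := -1) hb (by omega) (by omega) (by omega) 
        (Or.inr ⟨rfl, by omega, by rw [hb2]; omega⟩)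
  · obtain ⟨q, rfl⟩ : ∃ q, m = 2 * q - 1 := ⟨(m + 1) / 2, by omega⟩
    rcases Nat.mod_two_eq_zero_or_one q with hq | hq
    · obtain ⟨b, hb, hb2⟩ := dat_flip k 0 (q + 1) (by omega) (by omega) (by omega) (by omega)
      exact even_modd (j := (q + 1 + 1) / 2) (d := -1) hb (by omega) (by omega) (by omega) 
        (Or.inr ⟨rfl, by omega, by rw [hb2]; omega⟩)
    · exact even_modd (j := (q + 1) / 2) (d := 1) (dat_default k 0 hk) (by omega) (by omega) (by omega) 
        (Or.inl ⟨rfl, by omega, rfl⟩)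

lemma even_m3 {k : ℕ} (hk : 2 ≤ k) :
    ∃ t : ℕ → ZMod (2 * k), Inj t (2 * k) ∧ Good (ZMod (2 * k)) t 3 k := by
  have h := dat_default k 0 hk
  revert h
  generalize hal : (fun c => if c = 0 then 0 else c + 0 * k) = al
  generalize hb : (fun c => 2 * c + 1) = b
  intro h
  have c0 : hx k al b 0 1 = hx k al b 1 0 := by
    rw [← hal, ← hb]; simp [hx, zi]
  have c1 : hx k al b 0 3 = hx k al b 1 1 := by
    rw [← hal, ← hb]; simp [hx, zi]; norm_num
  refine ⟨_, hx_inj h 0 (by omega), ?_⟩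
  let y : ℕ → ℕ → ZMod (2 * k) := fun c i => 
    hx k al b c ((if c = 0 then 3 else if c = 1 then 1 else 0) + i)
  let len : ℕ → ℕ := fun c => 2 * k - (if c = 0 then 3 else if c = 1 then 1 else 0)
  refine ⟨y, len, ?_, ?_, ?_⟩
  · intro c hc
    simp only [len]; split_ifs <;> omega
  · intro c hc i i' hi hi' hh
    have := hx_inj h c hc _ _ (by simp only [len] at hi; omega) (by simp only [len] at hi'; omega) hh
    omega
  · intro a a' hne
    obtain ⟨c0, i0, hc0, hi0, he, huq⟩ := hx_color h a a' hne
    have hT : Tad (hx k al b 0) 3 s(a, a') ↔ (c0 = 0 ∧ i0 < 3) ∨ (c0 = 1 ∧ i0 = 0) := by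
      constructor
      · rintro (⟨i, hi, hh⟩ | hh)
        · have := huq 0 i (by omega) (by omega) hh
          omega
        · have := huq 1 0 (by omega) (by omega) (by rw [hh]; simp [*])
          omega
      · rintro (⟨rfl, hh⟩ | ⟨rfl, rfl⟩)
        · exact Or.inl ⟨i0, hh, he⟩
        · right; rw [he]; simp [*]
    have hE : ∀ c, c < k → (Ed (y c) (len c) s(a, a') ↔ c = c0 ∧ 
        (if c = 0 then 3 else if c = 1 then 1 else 0) ≤ i0) := by
      intro c hc
      constructor
      · rintro ⟨i, hi, hh⟩
        simp only [len] at hi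
        have := huq c _ hc (by omega) hh
        omega
      · rintro ⟨rfl, hh⟩
        refine ⟨i0 - (if c = 0 then 3 else if c = 1 then 1 else 0), by simp only [len]; omega, ?_⟩
        rw [he]; simp only [y]
        rw [← Nat.add_assoc, Nat.add_sub_cancel' hh]
    refine ⟨?_, ?_⟩
    · rw [hT]
      constructor
      · rintro ⟨c, hc, hh⟩
        rw [hE c hc] at hh
        obtain ⟨rfl, hh⟩ := hh
        split_ifs at hh <;> omega
      · intro hh
        refine ⟨c0, hc0, (hE c0 hc0).2 ⟨rfl, ?_⟩⟩
        split_ifs <;> omega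
    · intro c c' hc hc' h1 h2
      rw [hE c hc] at h1
      rw [hE c' hc'] at h2
      omega

def cy (k : ℕ) (c i : ℕ) : Option (ZMod (2 * k)) :=
  if i < 2 * k then some ((c : ZMod (2 * k)) + ((zi i : ℤ) : ZMod (2 * k))) else none

def nx (k i : ℕ) : ℕ := if i < 2 * k then i + 1 else 0

lemma cy_lt {k c i : ℕ} (h : i < 2 * k) : 
    cy k c i = some ((c : ZMod (2 * k)) + ((zi i : ℤ) : ZMod (2 * k))) := if_pos h

lemma cy_top {k c : ℕ} : cy k c (2 * k) = none := if_neg (by omega)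

lemma nx_lt {k i : ℕ} (h : i < 2 * k) : nx k i = i + 1 := if_pos h

lemma nx_top {k : ℕ} : nx k (2 * k) = 0 := if_neg (by omega)

lemma cy_inj (k c : ℕ) : Inj (cy k c) (2 * k + 1) := by
  intro i i' hi hi' h
  by_cases g : i < 2 * k <;> by_cases g' : i' < 2 * k
  · rw [cy_lt g, cy_lt g'] at h
    exact zi_inj k i i' g g' (add_left_cancel (Option.some_injective _ h))
  · rw [cy_lt g, show i' = 2 * k by omega, cy_top] at h; simp at h
  · rw [cy_lt g', show i = 2 * k by omega, cy_top] at h; simp at h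
  · omega

lemma cy_hx (k : ℕ) (c i : ℕ) (h : i < 2 * k) : 
    cy k c i = some (hx k (fun c => if c = 0 then 0 else c + 0 * k) (fun c => 2 * c + 1) c i) := by
  rw [cy_lt h]
  congr 1
  unfold hx
  have : (if c = 0 then 0 else c + 0 * k) = c := by split_ifs with h <;> simp [h]
  simp only [this]; push_cast; ring

lemma nat_inj {k u v : ℕ} (hu : u < 2 * k) (hv : v < 2 * k) (h : (u : ZMod (2 * k)) = (v : ZMod (2 * k))) : u = v := by
  have := congrArg ZMod.val h
  rwa [ZMod.val_cast_of_lt hu, ZMod.val_cast_of_lt hv] at this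

lemma cy_zero {k c : ℕ} (hk : 2 ≤ k) : cy k c 0 = some ((c : ℕ) : ZMod (2 * k)) := by
  rw [cy_lt (by omega)]; simp [zi]

lemma cy_last {k c : ℕ} (hk : 2 ≤ k) : cy k c (2 * k - 1) = some ((c + k : ℕ) : ZMod (2 * k)) := by
  rw [cy_lt (by omega)]
  have : zi (2 * k - 1) = k := by unfold zi; rw [if_neg (by omega)]; omega
  rw [this]; push_cast; rfl

lemma cy_color_none {k : ℕ} (hk : 2 ≤ k) (a : ZMod (2 * k)) :
    ∃ c0 i0, c0 < k ∧ i0 < 2 * k + 1 ∧ s(none, some a) = s(cy k c0 i0, cy k c0 (nx k i0)) ∧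
      ∀ c i, c < k → i < 2 * k + 1 → s(none, some a) = s(cy k c i, cy k c (nx k i)) → c = c0 ∧ i = i0 := by
  have : NeZero (2 * k) := ⟨by omega⟩
  obtain ⟨v, hv, rfl⟩ : ∃ v : ℕ, v < 2 * k ∧ (v : ZMod (2 * k)) = a := ⟨a.val, ZMod.val_lt a, by simp⟩
  have key : ∀ c i, c < k → i < 2 * k + 1 → s(none, some (v : ZMod (2 * k))) = s(cy k c i, cy k c (nx k i)) →
      (i = 2 * k ∧ c = v) ∨ (i = 2 * k - 1 ∧ c + k = v) := by
    intro c i hc hi hh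
    by_cases g1 : i = 2 * k
    · subst g1
      rw [cy_top, nx_top, cy_zero hk] at hh
      simp only [Sym2.eq_iff, Option.some_inj, reduceCtorEq, true_and, false_and, or_false, and_false] at hh
      exact Or.inl ⟨rfl, (nat_inj hv (by omega) hh).symm⟩
    · by_cases g2 : i = 2 * k - 1
      · subst g2
        rw [nx_lt (by omega), show 2 * k - 1 + 1 = 2 * k by omega, cy_top, cy_last hk] at hh
        simp only [Sym2.eq_iff, Option.some_inj, reduceCtorEq, true_and, and_true, false_and, false_or] at hh
        exact Or.inr ⟨rfl, (nat_inj hv (by omega) hh).symm⟩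
      · rw [nx_lt (by omega), cy_lt (show i < 2 * k by omega), cy_lt (show i + 1 < 2 * k by omega)] at hh
        simp [Sym2.eq_iff] at hh
  by_cases g : v < k
  · refine ⟨v, 2 * k, g, by omega, ?_, fun c i hc hi hh => ?_⟩
    · rw [cy_top, nx_top, cy_zero hk]
    · have := key c i hc hi hh; omega
  · refine ⟨v - k, 2 * k - 1, by omega, by omega, ?_, fun c i hc hi hh => ?_⟩
    · rw [nx_lt (by omega), show 2 * k - 1 + 1 = 2 * k by omega, cy_top, cy_last hk, Sym2.eq_swap,
        show v - k + k = v by omega]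
    · have := key c i hc hi hh; omega

lemma cy_color {k : ℕ} (hk : 2 ≤ k) (a a' : Option (ZMod (2 * k))) (hne : a ≠ a') :
    ∃ c0 i0, c0 < k ∧ i0 < 2 * k + 1 ∧ s(a, a') = s(cy k c0 i0, cy k c0 (nx k i0)) ∧
      ∀ c i, c < k → i < 2 * k + 1 → s(a, a') = s(cy k c i, cy k c (nx k i)) → c = c0 ∧ i = i0 := by
  rcases a with _ | a <;> rcases a' with _ | a'
  · exact absurd rfl hne
  · exact cy_color_none hk a'
  · rw [Sym2.eq_swap]; exact cy_color_none hk a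
  · obtain ⟨c0, i0, h1, h2, h3, h4⟩ := hx_color (dat_default k 0 hk) a a' (fun h => hne (by rw [h]))
    have mp : ∀ b b' : ZMod (2 * k), s(some a, some a') = s(some b, some b') ↔ s(a, a') = s(b, b') := by
      intro b b'; simp [Sym2.eq_iff]
    refine ⟨c0, i0, h1, by omega, ?_, fun c i hc hi hh => ?_⟩
    · rw [nx_lt (by omega), cy_hx _ _ _ (by omega), cy_hx _ _ _ (by omega), mp]; exact h3
    · by_cases g1 : i = 2 * k
      · subst g1
        rw [cy_top] at hh; simp [Sym2.eq_iff] at hh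
      · by_cases g2 : i = 2 * k - 1
        · subst g2
          rw [nx_lt (by omega), show 2 * k - 1 + 1 = 2 * k by omega, cy_top] at hh
          simp [Sym2.eq_iff] at hh
        · rw [nx_lt (by omega), cy_hx _ _ _ (by omega), cy_hx _ _ _ (by omega), mp] at hh
          exact h4 c i hc (by omega) hh

lemma odd_core {k m : ℕ} (hk : 2 ≤ k) (hm : 3 ≤ m) (hm2 : m ≤ 2 * k) :
    ∃ t : ℕ → Option (ZMod (2 * k)), Inj t (m + 1) ∧ Good (Option (ZMod (2 * k))) t m (k + 1) := by
  let t : ℕ → Option (ZMod (2 * k)) := fun i => if i = 0 then none else cy k 0 (i - 1)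
  have t0 : t 0 = none := rfl
  have ts : ∀ i, t (i + 1) = cy k 0 i := fun i => rfl
  refine ⟨t, ?_, ?_⟩
  · intro i i' hi hi' hh
    rcases i with _ | i <;> rcases i' with _ | i'
    · rfl
    · rw [t0, ts, cy_lt (by omega)] at hh; simp at hh
    · rw [t0, ts, cy_lt (by omega)] at hh; simp at hh
    · rw [ts, ts] at hh
      have := cy_inj k 0 i i' (by omega) (by omega) hh
      omega
  obtain ⟨m, rfl⟩ : ∃ q, m = q + 1 := ⟨m - 1, by omega⟩
  obtain ⟨j, ρ, hj, hρ, hjρ, -⟩ := cy_color hk (cy k 0 0) (cy k 0 m) 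
    (fun h => by have := cy_inj k 0 0 m (by omega) (by omega) h; omega)
  have hρ2 : ρ + 1 < 2 * k := by
    by_contra hcon
    rcases (show ρ = 2 * k ∨ ρ = 2 * k - 1 by omega) with rfl | rfl
    · rw [cy_top, cy_lt (show 0 < 2 * k by omega), cy_lt (show m < 2 * k by omega)] at hjρ
      simp [Sym2.eq_iff] at hjρ
    · rw [nx_lt (by omega), show 2 * k - 1 + 1 = 2 * k by omega, cy_top, 
        cy_lt (show 0 < 2 * k by omega), cy_lt (show m < 2 * k by omega)] at hjρ
      simp [Sym2.eq_iff] at hjρ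
  have hj0 : 0 < j := by
    rcases Nat.eq_zero_or_pos j with rfl | h
    · exfalso
      rw [nx_lt (by omega), Sym2.eq_iff] at hjρ
      rcases hjρ with ⟨h1, h2⟩ | ⟨h1, h2⟩
      · have := cy_inj k 0 _ _ (by omega) (by omega) h1
        have := cy_inj k 0 _ _ (by omega) (by omega) h2
        omega
      · have := cy_inj k 0 _ _ (by omega) (by omega) h1
        omega
    · exact h
  let R : ℕ → ℕ := fun c => if c = j then ρ else if c = j + 1 then 1 else 0
  have hR : ∀ c, R c + 1 < 2 * k := by
    intro c; simp only [R]; split_ifs <;> omega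
  let v : ℕ → ℕ := fun i => if i ≤ j then i else i + 1
  let cc : ℕ → ℕ := fun i => if i < j then i else i + 1
  let yX : ℕ → Option (ZMod (2 * k)) := fun i => some ((v (i + 1) : ℕ) : ZMod (2 * k))
  let rot : ℕ → ℕ → ℕ := fun c i => if R c + 1 + i < 2 * k + 1 then R c + 1 + i else R c + 1 + i - (2 * k + 1)
  let y : ℕ → ℕ → Option (ZMod (2 * k)) := fun c => if c = 0 then fun i => cy k 0 (m + i) else 
    if c = k then yX else fun i => cy k c (rot c i)
  let len : ℕ → ℕ := fun c => if c = 0 then 2 * k + 1 - m else if c = k then k - 1 else 2 * k + 1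
  have hX : ∀ i, i + 1 < k - 1 → s(yX i, yX (i + 1)) = 
      s(cy k (cc (i + 1)) (R (cc (i + 1))), cy k (cc (i + 1)) (nx k (R (cc (i + 1))))) := by
    intro i hi
    rw [nx_lt (by have := hR (cc (i + 1)); omega), cy_lt (by have := hR (cc (i + 1)); omega), cy_lt (hR _)]
    have z0 : zi 0 = 0 := rfl
    have z1 : zi 1 = 1 := rfl
    have z2 : zi 2 = -1 := rfl
    rcases lt_trichotomy (i + 1) j with g | g | g
    · have e1 : cc (i + 1) = i + 1 := if_pos g
      have e2 : R (i + 1) = 0 := by simp only [R]; rw [if_neg (by omega), if_neg (by omega)]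
      have e3 : v (i + 1) = i + 1 := if_pos (by omega)
      have e4 : v (i + 1 + 1) = i + 1 + 1 := if_pos (by omega)
      simp only [yX, e1, e2, e3, e4, z0, z1, Nat.zero_add]
      push_cast; simp
    · have e1 : cc (i + 1) = i + 1 + 1 := if_neg (by omega)
      have e2 : R (i + 1 + 1) = 1 := by simp only [R]; rw [if_neg (by omega), if_pos (by omega)]
      have e3 : v (i + 1) = i + 1 := if_pos (by omega)
      have e4 : v (i + 1 + 1) = i + 1 + 1 + 1 := if_neg (by omega)
      simp only [yX, e1, e2, e3, e4, z1, z2, Nat.reduceAdd]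
      rw [Sym2.eq_swap]
      push_cast; simp
    · have e1 : cc (i + 1) = i + 1 + 1 := if_neg (by omega)
      have e2 : R (i + 1 + 1) = 0 := by simp only [R]; rw [if_neg (by omega), if_neg (by omega)]
      have e3 : v (i + 1) = i + 1 + 1 := if_neg (by omega)
      have e4 : v (i + 1 + 1) = i + 1 + 1 + 1 := if_neg (by omega)
      simp only [yX, e1, e2, e3, e4, z0, z1, Nat.zero_add]
      push_cast; simp
  have hcc : ∀ i, i + 1 < k - 1 → cc (i + 1) < k ∧ cc (i + 1) ≠ 0 ∧ cc (i + 1) ≠ j := by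
    intro i hi; simp only [cc]; split_ifs <;> omega
  refine ⟨y, len, ?_, ?_, ?_⟩
  · intro c hc
    simp only [len]; split_ifs <;> omega
  · intro c hc
    by_cases hc0 : c = 0
    · simp only [y, len, hc0, if_true]
      intro i i' hi hi' hh
      have := cy_inj k 0 _ _ (by omega) (by omega) hh
      omega
    · by_cases hck : c = k
      · simp only [y, len, hc0, hck, if_true, if_neg (show k ≠ 0 by omega)]
        intro i i' hi hi' hh
        have hv : ∀ i, i < k - 1 → v (i + 1) < 2 * k := by
          intro i hi; simp only [v]; split_ifs <;> omega
        have := nat_inj (hv i hi) (hv i' hi') (Option.some_injective _ hh)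
        simp only [v] at this
        split_ifs at this <;> omega
      · simp only [y, len, hc0, hck, if_false]
        intro i i' hi hi' hh
        have hr := hR c
        have := cy_inj k c _ _ (by simp only [rot]; split_ifs <;> omega) (by simp only [rot]; split_ifs <;> omega) hh
        simp only [rot] at this
        split_ifs at this <;> omega
  · intro a a' hne
    obtain ⟨c0, i0, hc0, hi0, he, huq⟩ := cy_color hk a a' hne
    have hT : Tad t (m + 1) s(a, a') ↔ (c0 = 0 ∧ (i0 = 2 * k ∨ i0 < m)) ∨ (c0 = j ∧ i0 = ρ) := by
      constructor
      · rintro (⟨i, hi, hh⟩ | hh)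
        · rcases i with _ | i
          · have := huq 0 (2 * k) (by omega) (by omega) (by rw [hh, cy_top, nx_top, t0, ts])
            omega
          · have := huq 0 i (by omega) (by omega) (by rw [hh, nx_lt (by omega), ts, ts])
            omega
        · rw [ts 0, ts m, hjρ] at hh
          have := huq j ρ hj hρ hh
          omega
      · rintro (⟨rfl, hh | hh⟩ | ⟨rfl, rfl⟩)
        · refine Or.inl ⟨0, by omega, ?_⟩
          rw [he, hh, cy_top, nx_top, t0, ts]
        · refine Or.inl ⟨i0 + 1, by omega, ?_⟩
          rw [he, nx_lt (by omega), ts, ts]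
        · right; rw [ts 0, ts m, hjρ, he]
    have E0 : Ed (y 0) (len 0) s(a, a') ↔ c0 = 0 ∧ m ≤ i0 ∧ i0 < 2 * k := by
      simp only [y, len, if_true]
      constructor
      · rintro ⟨i, hi, hh⟩
        have := huq 0 (m + i) (by omega) (by omega) (by rw [hh, nx_lt (by omega), Nat.add_assoc])
        omega
      · rintro ⟨rfl, h1, h2⟩
        refine ⟨i0 - m, by omega, ?_⟩
        rw [he, nx_lt h2]; beta_reduce
        rw [← Nat.add_assoc, Nat.add_sub_cancel' h1]
    have EX : Ed (y k) (len k) s(a, a') ↔ c0 ≠ 0 ∧ c0 ≠ j ∧ i0 = R c0 := by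
      simp only [y, len, if_true, if_neg (show k ≠ 0 by omega)]
      constructor
      · rintro ⟨i, hi, hh⟩
        rw [hX i hi] at hh
        obtain ⟨q1, q2, q3⟩ := hcc i hi
        obtain ⟨rfl, rfl⟩ := huq _ _ q1 (by have := hR (cc (i + 1)); omega) hh
        exact ⟨q2, q3, rfl⟩
      · rintro ⟨h1, h2, rfl⟩
        obtain ⟨i, hi, rfl⟩ : ∃ i, i + 1 < k - 1 ∧ c0 = cc (i + 1) := by
          by_cases g : c0 < j
          · refine ⟨c0 - 1, by omega, ?_⟩
            simp only [cc]; split_ifs <;> omega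
          · refine ⟨c0 - 2, by omega, ?_⟩
            simp only [cc]; split_ifs <;> omega
        exact ⟨i, hi, he.trans (hX i hi).symm⟩
    have EC : ∀ c, 0 < c → c < k → (Ed (y c) (len c) s(a, a') ↔ c = c0 ∧ i0 ≠ R c) := by
      intro c h1 h2
      simp only [y, len, if_neg (show c ≠ 0 by omega), if_neg (show c ≠ k by omega)]
      have hr := hR c
      have hrot : ∀ i, i + 1 < 2 * k + 1 → rot c (i + 1) = nx k (rot c i) ∧ rot c i < 2 * k + 1 ∧ rot c i ≠ R c := by
        intro i hi
        simp only [rot, nx]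
        split_ifs <;> refine ⟨?_, ?_, ?_⟩ <;> omega
      constructor
      · rintro ⟨i, hi, hh⟩
        obtain ⟨q1, q2, q3⟩ := hrot i hi
        simp only [q1] at hh
        obtain ⟨rfl, rfl⟩ := huq c _ h2 q2 hh
        exact ⟨rfl, q3⟩
      · rintro ⟨rfl, h3⟩
        obtain ⟨i, hi, rfl⟩ : ∃ i, i + 1 < 2 * k + 1 ∧ i0 = rot c i := by
          by_cases g : R c < i0
          · refine ⟨i0 - R c - 1, by omega, ?_⟩
            simp only [rot]; split_ifs <;> omega
          · refine ⟨i0 + 2 * k - R c, by omega, ?_⟩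
            simp only [rot]; split_ifs <;> omega
        exact ⟨i, hi, by simp only [(hrot i hi).1]; exact he⟩
    have hRj : R j = ρ := if_pos rfl
    have EE : ∀ c, c < k + 1 → (Ed (y c) (len c) s(a, a') ↔ 
        (c = 0 ∧ c0 = 0 ∧ m ≤ i0 ∧ i0 < 2 * k) ∨ (c = k ∧ c0 ≠ 0 ∧ c0 ≠ j ∧ i0 = R c0) ∨ 
        (0 < c ∧ c = c0 ∧ i0 ≠ R c0)) := by
      intro c hc
      rcases Nat.eq_zero_or_pos c with rfl | g
      · rw [E0]; constructor
        · intro h; exact Or.inl ⟨rfl, h⟩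
        · rintro (h | h | h)
          · exact h.2
          · omega
          · omega
      · rcases (show c = k ∨ c < k by omega) with rfl | g2
        · rw [EX]; constructor
          · intro h; exact Or.inr (Or.inl ⟨rfl, h⟩)
          · rintro (h | h | h)
            · omega
            · exact h.2
            · omega
        · rw [EC c g g2]; constructor
          · rintro ⟨rfl, h⟩; exact Or.inr (Or.inr ⟨g, rfl, h⟩)
          · rintro (h | h | ⟨-, rfl, h⟩)
            · omega
            · omega
            · exact ⟨rfl, h⟩
    refine ⟨?_, ?_⟩
    · rw [hT]
      constructor
      · rintro ⟨c, hc, hh⟩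
        rw [EE c hc] at hh
        rintro (⟨h1, h2⟩ | ⟨rfl, rfl⟩)
        · omega
        · rw [hRj] at hh; grind
      · intro hh
        rcases Nat.eq_zero_or_pos c0 with g | g
        · exact ⟨0, by omega, (EE _ (by omega)).2 (Or.inl (by omega))⟩
        · by_cases g2 : i0 = R c0
          · refine ⟨k, by omega, (EE _ (by omega)).2 (Or.inr (Or.inl ⟨rfl, by omega, ?_, g2⟩))⟩
            rintro rfl
            exact hh (Or.inr ⟨rfl, by rw [g2, hRj]⟩)
          · exact ⟨c0, by omega, (EE _ (by omega)).2 (Or.inr (Or.inr ⟨g, rfl, g2⟩))⟩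
    · intro c c' hc hc' h1 h2
      rw [EE c hc] at h1
      rw [EE c' hc'] at h2
      grind

end Tadp

/-- Gallai's conjecture holds for `K_n` minus a tadpole `T_{m,1}`
(a cycle on `m` vertices plus a pendant edge), for `3 ≤ m ≤ n - 1`. -/
theorem gallai_complete_minus_tadpole (n m : ℕ) (hn : 4 ≤ n) (hm : 3 ≤ m)
    (hmn : m ≤ n - 1) (f : ZMod m → Fin n) (hf : Function.Injective f)
    (w : Fin n) (hw : w ∉ Set.range f) :
    ∃ P : List (Σ x y : Fin n,
        ((⊤ : SimpleGraph (Fin n)).deleteEdges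
          {e | (∃ i, e = s(f i, f (i + 1))) ∨ e = s(f 0, w)}).Walk x y),
      IsPathDecomp ((⊤ : SimpleGraph (Fin n)).deleteEdges
          {e | (∃ i, e = s(f i, f (i + 1))) ∨ e = s(f 0, w)}) P ∧
      P.length ≤ (n + 1) / 2 := by
  rcases Nat.mod_two_eq_zero_or_one n with hp | hp
  · obtain ⟨k, rfl⟩ : ∃ k, n = 2 * k := ⟨n / 2, by omega⟩
    haveI : NeZero (2 * k) := ⟨by omega⟩
    obtain ⟨t, ht, hg⟩ : ∃ t : ℕ → ZMod (2 * k), Tadp.Inj t (2 * k) ∧ Tadp.Good (ZMod (2 * k)) t m k := by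
      by_cases h3 : m = 3
      · subst h3; exact Tadp.even_m3 (by omega)
      · exact Tadp.even_all (by omega) hm (by omega) (Or.inr h3)
    refine Tadp.final (2 * k) m hm f hf w hw (ZMod.card (2 * k)) t 
      (fun i i' hi hi' h => ht i i' (by omega) (by omega) h) ?_
    rw [show (2 * k + 1) / 2 = k by omega]; exact hg
  · obtain ⟨k, rfl⟩ : ∃ k, n = 2 * k + 1 := ⟨n / 2, by omega⟩
    haveI : NeZero (2 * k) := ⟨by omega⟩
    obtain ⟨t, ht, hg⟩ := Tadp.odd_core (k := k) (m := m) (by omega) hm (by omega)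
    refine Tadp.final (2 * k + 1) m hm f hf w hw (by rw [Fintype.card_option, ZMod.card]) t ht ?_
    rw [show (2 * k + 1 + 1) / 2 = k + 1 by omega]; exact hg
end
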